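/- Let κ < 2^ℵ₀ be a cardinal. Suppose (X, μ) is a measure space satisfying property (Aκ), and suppose (Y, d, H^h) is a compact metric space satisfying property (H∞). If f : X → Y is a measurable surjection, then there exists a set N ⊆ X with μ(N) = 0 and H^h(f(N)) > 0. Moreover, if in addition X carries a topology with a countable basis in which points are closed, and f has the property that for every closed set F ⊆ Y the preimage f⁻¹(F) is a countable union of closed sets, then N can be chosen to be perfect. -/

import Mathlib

open MeasureTheory Set Filter Topology
open scoped NNReal ENNReal

universe u v

/-- A Hausdorff (gauge) function `h : [0,∞) → [0,∞]`: nondecreasing, right-continuous,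
and positive on positive arguments. -/
structure IsHausdorffFunction (h : ℝ≥0 → ℝ≥0∞) : Prop where
  mono : Monotone h
  right_continuous : ∀ t : ℝ≥0, ContinuousWithinAt h (Set.Ici t) t
  pos : ∀ t : ℝ≥0, 0 < t → 0 < h t

/-- `h` is of finite order: `limsup_{t→0+} h(3t)/h(t) < ∞`. -/
def FiniteOrder (h : ℝ≥0 → ℝ≥0∞) : Prop :=
  Filter.limsup (fun t : ℝ≥0 => h (3 * t) / h t) (nhdsWithin 0 (Set.Ioi 0)) < ⊤

/-- The Hausdorff (outer) measure built from the gauge `h`: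
`H^h(E) = sup_{δ>0} inf { Σ h(diam Uᵢ) : E ⊆ ⋃ Uᵢ, diam Uᵢ ≤ δ }`. -/
noncomputable def hausdorffM {Z : Type*} [EMetricSpace Z] (h : ℝ≥0 → ℝ≥0∞) :
    MeasureTheory.OuterMeasure Z :=
  MeasureTheory.OuterMeasure.mkMetric (fun d => h d.toNNReal)

/-- A set `S` is σ-finite with respect to an outer measure `μ` if it is a countable union
of Carathéodory-measurable sets of finite measure. -/
def SigmaFiniteSet {Z : Type*} (μ : MeasureTheory.OuterMeasure Z) (S : Set Z) : Prop :=
  ∃ A : ℕ → Set Z, (∀ n, μ.IsCaratheodory (A n) ∧ μ (A n) < ⊤) ∧ S = ⋃ n, A n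

/-- A metric space has finite structural dimension if for every `ξ > 0` there are `N` and
`δ₀ > 0` such that every set of diameter `δ ≤ δ₀` can be covered by `N` sets of diameter
at most `ξ·δ`. -/
def FiniteStructuralDim (Z : Type*) [EMetricSpace Z] : Prop :=
  ∀ ξ : ℝ≥0, 0 < ξ → ∃ (N : ℕ) (δ₀ : ℝ≥0), 0 < δ₀ ∧
    ∀ s : Set Z, EMetric.diam s ≤ δ₀ →
      ∃ U : Fin N → Set Z, s ⊆ ⋃ i, U i ∧ ∀ i, EMetric.diam (U i) ≤ ξ * EMetric.diam s

/-- Property (H) for a subspace `Y` of the complete separable metric space `Z`. -/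
structure PropertyH {Z : Type*} [MetricSpace Z] (Y : Set Z) (h : ℝ≥0 → ℝ≥0∞) : Prop where
  complete : CompleteSpace Z
  separable : TopologicalSpace.SeparableSpace Z
  analytic : MeasureTheory.AnalyticSet Y
  hausdorff : IsHausdorffFunction h
  cont : Continuous h
  zero : h 0 = 0
  alt : FiniteOrder h ∨ FiniteStructuralDim Z ∨ ∀ x y z : Z, dist x z ≤ max (dist x y) (dist y z)

/-- Property (H∞): property (H) together with non-σ-finiteness of `Y` w.r.t. `H^h`. -/
def PropertyHInf {Z : Type*} [MetricSpace Z] (Y : Set Z) (h : ℝ≥0 → ℝ≥0∞) : Prop :=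
  PropertyH Y h ∧ ¬ SigmaFiniteSet (hausdorffM h) Y

/-- Property (Aκ): `X` is a union of κ-many measurable sets of finite measure, and
κ-many null sets always union to a null set. -/
def PropertyA {X : Type u} (μ : MeasureTheory.OuterMeasure X) (κ : Cardinal.{u}) : Prop :=
  (∃ (ι : Type u) (A : ι → Set X), Cardinal.mk ι = κ ∧ (⋃ i, A i) = Set.univ ∧
      ∀ i, μ.IsCaratheodory (A i) ∧ μ (A i) < ⊤) ∧
  ∀ (ι : Type u) (A : ι → Set X), Cardinal.mk ι = κ → (∀ i, μ (A i) = 0) → μ (⋃ i, A i) = 0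

/-- A set is perfect if it is closed and every open set meeting it meets it in an
infinite set. -/
def PerfectSet {X : Type*} [TopologicalSpace X] (C : Set X) : Prop :=
  IsClosed C ∧ ∀ O : Set X, IsOpen O → (O ∩ C).Nonempty → (O ∩ C).Infinite

/-- The gauge `d ↦ d^s`. -/
noncomputable def sGauge (s : ℝ≥0) : ℝ≥0 → ℝ≥0∞ := fun d => (d : ℝ≥0∞) ^ (s : ℝ)

/-- Hausdorff–Besicovitch dimension: the supremum of all `s ≥ 0` with `H^{d^s}(E) > 0`. -/
noncomputable def hDim {Z : Type*} [EMetricSpace Z] (E : Set Z) : ℝ≥0∞ :=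
  ⨆ (s : ℝ≥0) (_ : 0 < hausdorffM (sGauge s) E), (s : ℝ≥0∞)

/-!
If `Y` contains continuum many pairwise disjoint compact sets of positive `H^h`-measure, then their
preimages are disjoint and measurable, and each of the `κ` pieces of finite measure charges only
countably many of them. Since `κ < 2 ^ ℵ₀`, some preimage is null. When it is a countable union of
closed sets, one of these has an image of positive measure, and so does its perfect kernel, because
countable sets are `H^h`-null.

To find such a family, use that `Y` is not σ-finite to slow the gauge down: a factor `φ` tending to
`0` at `0` is built by repeated halving, such that the sums `∑ h(diam U) φ(diam U)` over finite
covers of `Y` stay bounded away from `0`. If a halving at arbitrarily small scales made the content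
drop, then a limit of the corresponding covers would cover `Y` up to a set of finite `H^h`-measure,
which the content ignores.
By (a), (b) or (c), a set enlarged by its own diameter costs only a constant times more, so every
finite cover has a disjoint subfamily of comparable cost. This is what the Hahn-Banach theorem needs
to produce a finite measure `ν ≠ 0` with `ν U ≤ h(diam U) φ(diam U)` for open `U`.
As `ν` has vanishing density with respect to `h`, every set can be split into disjoint halves of
which each has about half the `ν`-mass of the set inside every `U` that is not too small, while the
small `U` are controlled by the density. Iterating, one obtains a Cantor tree along each of whose
branches the renormalized measures keep satisfying a Frostman bound, so that the branch has positive
`H^h`-measure.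
-/

/-! ### Measures below a set function -/

section WeightedCovers

variable {K : Type*}

lemma exists_disjoint_subfamily_meeting (d : Set K → ℝ) (d0 : ∀ U, 0 ≤ d U)
    (s : Finset (Set K)) :
    ∃ B ⊆ s, (B : Set (Set K)).PairwiseDisjoint id ∧
      ∀ U ∈ s, U.Nonempty → ∃ V ∈ B, (U ∩ V).Nonempty ∧ d U ≤ d V := by
  classical
  -- Among finitely many sizes, `d U ≤ τ * d V` with `τ > 1` close to `1` means `d U ≤ d V`.
  obtain ⟨τ, hτ, hτ1⟩ : ∃ τ : ℝ,
      (∀ U ∈ s, ∀ V ∈ s, d U ≤ τ * d V → d U ≤ d V) ∧ τ ∈ Ioi (1 : ℝ) := by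
    refine (Eventually.and ?_ self_mem_nhdsWithin : ∀ᶠ τ in 𝓝[>] (1 : ℝ), _).exists
    refine (Finset.eventually_all s).2 fun U _ => (Finset.eventually_all s).2 fun V _ => ?_
    rcases le_or_gt (d U) (d V) with h | h
    · exact Eventually.of_forall fun _ _ => h
    · have hlim : Tendsto (fun τ : ℝ => τ * d V) (𝓝[>] 1) (𝓝 (d V)) :=
        ((continuous_mul_const (d V)).tendsto' 1 (d V) (one_mul _)).mono_left nhdsWithin_le_nhds
      filter_upwards [hlim.eventually_lt_const h] with τ hlt hle
      exact absurd hle hlt.not_ge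
  obtain ⟨R, hR⟩ := (s.finite_toSet.image d).bddAbove
  obtain ⟨u, hus, hud, hu⟩ := Vitali.exists_disjoint_subfamily_covering_enlargement
    (id : Set K → Set K) {U ∈ (s : Set (Set K)) | U.Nonempty} d τ hτ1 (fun U _ => d0 U) R
    (fun U hU => hR (mem_image_of_mem d hU.1)) (fun U hU => hU.2)
  have huf : u.Finite := s.finite_toSet.subset fun U hU => (hus hU).1
  refine ⟨huf.toFinset, fun U hU => (hus (huf.mem_toFinset.1 hU)).1, by simpa using hud,
    fun U hU hne => ?_⟩
  obtain ⟨V, hV, hUV, hd⟩ := hu U ⟨hU, hne⟩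
  exact ⟨V, huf.mem_toFinset.2 hV, hUV, hτ U hU V (hus hV).1 hd⟩

/-- The function `∑ a_U 1_U` of a finitely supported family of weights `a` on sets. -/
noncomputable def coverMultiplicity (K : Type*) : (Set K →₀ ℝ) →ₗ[ℝ] K → ℝ :=
  Finsupp.linearCombination ℝ fun U => U.indicator 1

/-- The cost `∑ a_U g(U)` of a finitely supported family of weights `a` on sets. -/
noncomputable def coverCost (g : Set K → ℝ) : (Set K →₀ ℝ) →ₗ[ℝ] ℝ :=
  Finsupp.linearCombination ℝ g

lemma coverMultiplicity_single (U : Set K) (x : K) :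
    coverMultiplicity K (Finsupp.single U 1) x = U.indicator 1 x := by
  simp [coverMultiplicity]

lemma coverCost_single (g : Set K → ℝ) (U : Set K) : coverCost g (Finsupp.single U 1) = g U := by
  simp [coverCost]

lemma coverCost_nonneg {g : Set K → ℝ} (g0 : ∀ U, 0 ≤ g U) {a : Set K →₀ ℝ} (ha : 0 ≤ a) :
    0 ≤ coverCost g a := by
  rw [coverCost, Finsupp.linearCombination_apply]
  exact Finset.sum_nonneg fun U _ => mul_nonneg (ha U) (g0 U)

lemma biUnion_support_eq_univ {a : Set K →₀ ℝ}
    (ha : ∀ x, coverMultiplicity K a x ≠ 0) : ⋃ U ∈ a.support, U = univ := by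
  refine eq_univ_of_forall fun x => ?_
  by_contra hx
  refine ha x ?_
  rw [coverMultiplicity, Finsupp.linearCombination_apply, Finsupp.sum, Finset.sum_apply]
  refine Finset.sum_eq_zero fun U hU => ?_
  have hxU : x ∉ U := fun h => hx (mem_biUnion hU h)
  simp [hxU]

lemma sum_indicator_le_one {B : Finset (Set K)} (hB : (B : Set (Set K)).PairwiseDisjoint id)
    (x : K) : ∑ U ∈ B, U.indicator (1 : K → ℝ) x ≤ 1 := by
  by_cases hx : ∃ U ∈ B, x ∈ U
  · obtain ⟨U, hU, hxU⟩ := hx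
    have hV : ∀ V ∈ B, V ≠ U → V.indicator (1 : K → ℝ) x = 0 := fun V hV hVU =>
      have hUV : Disjoint U V := hB hU hV hVU.symm
      indicator_of_notMem (disjoint_left.1 hUV hxU) _
    rw [Finset.sum_eq_single_of_mem U hU hV]
    exact indicator_le_self' (fun _ _ => zero_le_one) x
  · push Not at hx
    rw [Finset.sum_eq_zero fun U hU => indicator_of_notMem (hx U hU) _]
    exact zero_le_one

lemma sub_smul_sum_single_nonneg {a : Set K →₀ ℝ} (ha : 0 ≤ a) {B : Finset (Set K)} {t : ℝ}
    (ht : ∀ U ∈ B, t ≤ a U) : 0 ≤ a - t • ∑ U ∈ B, Finsupp.single U 1 := by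
  intro V
  by_cases hV : V ∈ B
  · simpa [Finsupp.finsetSum_apply, Finsupp.single_apply, hV] using ht V hV
  · simpa [Finsupp.finsetSum_apply, Finsupp.single_apply, hV] using ha V

lemma card_support_sub_smul_sum_single_lt {a : Set K →₀ ℝ} {B : Finset (Set K)}
    (hB : B ⊆ a.support) {W : Set K} (hW : W ∈ B) :
    (a - a W • ∑ U ∈ B, Finsupp.single U 1).support.card < a.support.card := by
  refine Finset.card_lt_card ((Finset.ssubset_iff_of_subset fun V hV => ?_).2 ⟨W, hB hW, ?_⟩)
  · by_contra h
    have hVB : V ∉ B := fun hVB => h (hB hVB)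
    rw [Finsupp.notMem_support_iff] at h
    simp [Finsupp.single_apply, hVB, h] at hV
  · simp [Finsupp.single_apply, hW]

/-- `DisjointSubcoverBound g C c` says that every finite cover has a disjoint subfamily whose
`g`-cost is at least `c / C`. -/
def DisjointSubcoverBound (g : Set K → ℝ) (C c : ℝ) : Prop :=
  ∀ s : Finset (Set K), ⋃ U ∈ s, U = univ →
    ∃ B ⊆ s, (B : Set (Set K)).PairwiseDisjoint id ∧ c ≤ C * ∑ U ∈ B, g U

-- Peel off the smallest weight from a disjoint subfamily: the multiplicity drops by at most that
-- weight, and the support shrinks.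
lemma DisjointSubcoverBound.mul_le_coverCost {g : Set K → ℝ} {C c : ℝ}
    (h : DisjointSubcoverBound g C c) (g0 : ∀ U, 0 ≤ g U) (hC : 0 ≤ C) (hc : 0 ≤ c)
    {A : ℝ} {a : Set K →₀ ℝ} (ha : 0 ≤ a) (hA : ∀ x, A ≤ coverMultiplicity K a x) :
    A * c ≤ C * coverCost g a := by
  induction hn : a.support.card using Nat.strong_induction_on generalizing a A with | _ n ih =>
  have hcost : 0 ≤ C * coverCost g a := mul_nonneg hC (coverCost_nonneg g0 ha)
  rcases le_or_gt A 0 with hA0 | hA0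
  · exact (mul_nonpos_of_nonpos_of_nonneg hA0 hc).trans hcost
  obtain ⟨B, hB, hBd, hBc⟩ :=
    h a.support (biUnion_support_eq_univ fun x => (hA0.trans_le (hA x)).ne')
  rcases B.eq_empty_or_nonempty with rfl | hBne
  · obtain rfl : c = 0 := hc.antisymm' (by simpa using hBc)
    simpa using hcost
  obtain ⟨W, hW, hWmin⟩ := B.exists_min_image a hBne
  set b : Set K →₀ ℝ := ∑ U ∈ B, Finsupp.single U 1
  have hb : ∀ x, coverMultiplicity K b x ≤ 1 := fun x => by
    simpa [b, map_sum, coverMultiplicity_single] using sum_indicator_le_one hBd x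
  have hcb : coverCost g b = ∑ U ∈ B, g U := by simp [b, map_sum, coverCost_single]
  have hrest : (A - a W) * c ≤ C * coverCost g (a - a W • b) := by
    refine ih _ (hn ▸ card_support_sub_smul_sum_single_lt hB hW)
      (sub_smul_sum_single_nonneg ha hWmin) (fun x => ?_) rfl
    have := mul_le_mul_of_nonneg_left (hb x) (ha W)
    simpa using sub_le_sub (hA x) (this.trans_eq (mul_one _))
  calc A * c = (A - a W) * c + a W * c := by ring
    _ ≤ C * coverCost g (a - a W • b) + a W * (C * coverCost g b) :=
      add_le_add hrest (mul_le_mul_of_nonneg_left (hcb ▸ hBc) (ha W))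
    _ = C * coverCost g a := by
      rw [map_sub, map_smul, smul_eq_mul]
      ring

end WeightedCovers

section Frostman

variable {K : Type*} [TopologicalSpace K] {g : Set K → ℝ} {f f' : K → ℝ}

/-- The finitely supported nonnegative weights on open sets whose multiplicity dominates `f`: the
fractional open covers of `f`. -/
def fractionalCovers (f : K → ℝ) : Set (Set K →₀ ℝ) :=
  {a | 0 ≤ a ∧ (∀ U ∈ a.support, IsOpen U) ∧ ∀ x, f x ≤ coverMultiplicity K a x}

/-- The least cost of a fractional open cover of `f`; as a function of `f` it is the sublinear
functional to which the Hahn–Banach theorem is applied in Frostman's lemma. -/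
noncomputable def fractionalCost (g : Set K → ℝ) (f : K → ℝ) : ℝ :=
  sInf (coverCost g '' fractionalCovers f)

lemma smul_mem_fractionalCovers {a : Set K →₀ ℝ} (ha : a ∈ fractionalCovers f) {r : ℝ}
    (hr : 0 ≤ r) : r • a ∈ fractionalCovers (r • f) := by
  refine ⟨smul_nonneg hr ha.1, fun U hU => ha.2.1 U (Finsupp.support_smul hU), fun x => ?_⟩
  rw [map_smul]
  exact mul_le_mul_of_nonneg_left (ha.2.2 x) hr

lemma add_mem_fractionalCovers {a a' : Set K →₀ ℝ} (ha : a ∈ fractionalCovers f)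
    (ha' : a' ∈ fractionalCovers f') : a + a' ∈ fractionalCovers (f + f') := by
  classical
  refine ⟨add_nonneg ha.1 ha'.1, fun U hU => ?_, fun x => ?_⟩
  · exact (Finset.mem_union.1 (Finsupp.support_add hU)).elim (ha.2.1 U) (ha'.2.1 U)
  · rw [map_add]
    exact add_le_add (ha.2.2 x) (ha'.2.2 x)

lemma single_mem_fractionalCovers {U : Set K} (hU : IsOpen U)
    (hf : ∀ x, f x ≤ U.indicator 1 x) : Finsupp.single U 1 ∈ fractionalCovers f := by
  refine ⟨Finsupp.single_nonneg.2 zero_le_one, fun V hV => ?_, fun x => ?_⟩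
  · rwa [Finset.mem_singleton.1 (Finsupp.support_single_subset hV)]
  · rw [coverMultiplicity_single]
    exact hf x

lemma fractionalCovers_nonempty (hf : BddAbove (range f)) : (fractionalCovers f).Nonempty := by
  obtain ⟨M, hM⟩ := hf
  have h : Finsupp.single univ 1 ∈ fractionalCovers (1 : K → ℝ) :=
    single_mem_fractionalCovers isOpen_univ fun x => by simp
  refine ⟨max M 0 • Finsupp.single univ 1, ?_⟩
  obtain ⟨h0, hopen, hle⟩ := smul_mem_fractionalCovers h (le_max_right M 0)
  refine ⟨h0, hopen, fun x => le_trans ?_ (hle x)⟩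
  simpa using Or.inl (hM ⟨x, rfl⟩)

lemma bddBelow_coverCost_fractionalCovers (g0 : ∀ U, 0 ≤ g U) (f : K → ℝ) :
    BddBelow (coverCost g '' fractionalCovers f) :=
  ⟨0, forall_mem_image.2 fun _ ha => coverCost_nonneg g0 ha.1⟩

lemma fractionalCost_le (g0 : ∀ U, 0 ≤ g U) {a : Set K →₀ ℝ} (ha : a ∈ fractionalCovers f) :
    fractionalCost g f ≤ coverCost g a :=
  csInf_le (bddBelow_coverCost_fractionalCovers g0 f) (mem_image_of_mem _ ha)

lemma fractionalCost_le_of_le_indicator (g0 : ∀ U, 0 ≤ g U) {U : Set K} (hU : IsOpen U)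
    (hf : ∀ x, f x ≤ U.indicator 1 x) : fractionalCost g f ≤ g U :=
  (fractionalCost_le g0 (single_mem_fractionalCovers hU hf)).trans_eq (coverCost_single g U)

lemma fractionalCost_nonpos (g0 : ∀ U, 0 ≤ g U) (hf : ∀ x, f x ≤ 0) : fractionalCost g f ≤ 0 := by
  have h : (0 : Set K →₀ ℝ) ∈ fractionalCovers f := ⟨le_rfl, by simp, by simpa using hf⟩
  simpa using fractionalCost_le g0 h

open scoped Pointwise in
lemma fractionalCost_smul {r : ℝ} (hr : 0 < r) (f : K → ℝ) :
    fractionalCost g (r • f) = r * fractionalCost g f := by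
  rw [← smul_eq_mul, fractionalCost, fractionalCost, ← Real.sInf_smul_of_nonneg hr.le]
  congr 1
  refine Subset.antisymm ?_ ?_
  · rintro _ ⟨a, ha, rfl⟩
    have h := smul_mem_fractionalCovers ha (inv_nonneg.2 hr.le)
    rw [inv_smul_smul₀ hr.ne'] at h
    exact ⟨_, ⟨_, h, rfl⟩, by simp [hr.ne']⟩
  · rintro _ ⟨_, ⟨a, ha, rfl⟩, rfl⟩
    exact ⟨r • a, smul_mem_fractionalCovers ha hr.le, by simp⟩

open scoped Pointwise in
lemma fractionalCost_add_le (g0 : ∀ U, 0 ≤ g U) (hf : BddAbove (range f))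
    (hf' : BddAbove (range f')) :
    fractionalCost g (f + f') ≤ fractionalCost g f + fractionalCost g f' := by
  have hne := (fractionalCovers_nonempty hf).image (coverCost g)
  have hne' := (fractionalCovers_nonempty hf').image (coverCost g)
  rw [fractionalCost, fractionalCost, fractionalCost,
    ← csInf_add hne (bddBelow_coverCost_fractionalCovers g0 f) hne'
      (bddBelow_coverCost_fractionalCovers g0 f')]
  refine csInf_le_csInf (bddBelow_coverCost_fractionalCovers g0 _) (hne.add hne') ?_
  rintro _ ⟨_, ⟨a, ha, rfl⟩, _, ⟨a', ha', rfl⟩, rfl⟩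
  exact ⟨a + a', add_mem_fractionalCovers ha ha', map_add _ _ _⟩

lemma exists_linearMap_le_sublinear {E : Type*} [AddCommGroup E] [Module ℝ E] (p : E → ℝ)
    (hsmul : ∀ r : ℝ, 0 < r → ∀ x, p (r • x) = r * p x) (hadd : ∀ x y, p (x + y) ≤ p x + p y)
    (e : E) : ∃ ℓ : E →ₗ[ℝ] ℝ, ℓ e = p e ∧ ∀ x, ℓ x ≤ p x := by
  have hp0 : p 0 = 0 := by
    have h := hsmul 2 two_pos 0
    rw [smul_zero] at h
    linarith
  have hspan : ∀ r : ℝ, r * p e ≤ p (r • e) := fun r => by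
    rcases lt_trichotomy r 0 with hr | rfl | hr
    · have h := hadd (r • e) (-r • e)
      rw [← add_smul, add_neg_cancel, zero_smul, hp0, hsmul (-r) (neg_pos.2 hr)] at h
      linarith
    · simp [hp0]
    · exact (hsmul r hr e).ge
  have hzero : ∀ r : ℝ, r • e = 0 → r • p e = 0 := fun r hr => by
    rcases smul_eq_zero.1 hr with rfl | rfl
    · exact zero_smul _ _
    · rw [hp0, smul_zero]
  obtain ⟨ℓ, hext, hle⟩ := exists_extension_of_le_sublinear
    (LinearPMap.mkSpanSingleton' e (p e) hzero) p hsmul hadd (by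
      rintro ⟨x, hx⟩
      obtain ⟨r, rfl⟩ := Submodule.mem_span_singleton.1 hx
      rw [LinearPMap.mkSpanSingleton'_apply]
      exact hspan r)
  refine ⟨ℓ, ?_, hle⟩
  exact (hext ⟨e, Submodule.mem_span_singleton_self e⟩).trans
    (LinearPMap.mkSpanSingleton'_apply_self e (p e) hzero _)

open scoped CompactlySupported

variable [CompactSpace K] [T2Space K] [MeasurableSpace K] [BorelSpace K]

lemma exists_measure_of_positive_linearMap (Λ : C_c(K, ℝ) →ₚ[ℝ] ℝ)
    (hΛ : ∀ U, IsOpen U → ∀ f : C_c(K, ℝ), (∀ x, f x ≤ U.indicator 1 x) → Λ f ≤ g U)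
    {e : C_c(K, ℝ)} (he : ∀ x, e x = 1) :
    ∃ ν : Measure K, IsFiniteMeasure ν ∧ ENNReal.ofReal (Λ e) ≤ ν univ ∧
      ∀ U, IsOpen U → ν U ≤ ENNReal.ofReal (g U) := by
  refine ⟨RealRMK.rieszMeasure Λ, inferInstance,
    RealRMK.le_rieszMeasure_tsupport_subset Λ (by simp [he]) (subset_univ _), fun U hU => ?_⟩
  rw [hU.measure_eq_iSup_isCompact]
  refine iSup₂_le fun L hL => iSup_le fun hLc => ?_
  obtain ⟨f, hf1, hf0, -, hfI⟩ := exists_continuous_one_zero_of_isCompact hLc hU.isClosed_compl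
    (disjoint_compl_right_iff_subset.2 hL)
  let F : C_c(K, ℝ) := ⟨f, HasCompactSupport.of_compactSpace _⟩
  have hF : ∀ x, F x ≤ U.indicator 1 x := fun x => by
    by_cases hx : x ∈ U
    · exact (hfI x).2.trans_eq (indicator_of_mem hx 1).symm
    · exact ((hf0 hx).trans (indicator_of_notMem hx 1).symm).le
  exact (RealRMK.rieszMeasure_le_of_eq_one Λ (fun x => (hfI x).1) hLc fun x hx => hf1 hx).trans
    (ENNReal.ofReal_le_ofReal (hΛ U hU F hF))

lemma exists_measure_le_of_fractionalCost (g0 : ∀ U, 0 ≤ g U) :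
    ∃ ν : Measure K, IsFiniteMeasure ν ∧ ENNReal.ofReal (fractionalCost g 1) ≤ ν univ ∧
      ∀ U, IsOpen U → ν U ≤ ENNReal.ofReal (g U) := by
  have hbdd : ∀ f : C_c(K, ℝ), BddAbove (range f) := fun f =>
    (isCompact_range f.continuous).bddAbove
  let e : C_c(K, ℝ) := ⟨⟨1, continuous_const⟩, HasCompactSupport.of_compactSpace _⟩
  obtain ⟨ℓ, hℓe, hℓ⟩ := exists_linearMap_le_sublinear (fun f : C_c(K, ℝ) => fractionalCost g f)
    (fun r hr f => by simpa only [CompactlySupportedContinuousMap.coe_smul] using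
      fractionalCost_smul hr f)
    (fun f f' => by simpa only [CompactlySupportedContinuousMap.coe_add] using
      fractionalCost_add_le g0 (hbdd f) (hbdd f')) e
  have hpos : ∀ f : C_c(K, ℝ), 0 ≤ f → 0 ≤ ℓ f := fun f hf => by
    have h := (hℓ (-f)).trans (fractionalCost_nonpos g0 fun x => by simpa using hf x)
    simpa using h
  obtain ⟨ν, hν, htotal, hle⟩ := exists_measure_of_positive_linearMap
    (PositiveLinearMap.mk₀ ℓ hpos)
    (fun U hU f hf => (hℓ f).trans (fractionalCost_le_of_le_indicator g0 hU hf))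
    (e := e) fun _ => rfl
  refine ⟨ν, hν, le_trans (ENNReal.ofReal_le_ofReal ?_) htotal, hle⟩
  exact hℓe.ge

lemma DisjointSubcoverBound.exists_measure {C c : ℝ} (h : DisjointSubcoverBound g C c)
    (g0 : ∀ U, 0 ≤ g U) (hC : 0 < C) (hc : 0 < c) :
    ∃ ν : Measure K, IsFiniteMeasure ν ∧ 0 < ν univ ∧
      ∀ U, IsOpen U → ν U ≤ ENNReal.ofReal (g U) := by
  obtain ⟨ν, hν, htotal, hle⟩ := exists_measure_le_of_fractionalCost g0
  refine ⟨ν, hν, lt_of_lt_of_le (ENNReal.ofReal_pos.2 ?_) htotal, hle⟩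
  refine (div_pos hc hC).trans_le (le_csInf ?_ ?_)
  · exact (fractionalCovers_nonempty ⟨1, by rintro _ ⟨x, rfl⟩; exact le_rfl⟩).image _
  · rintro _ ⟨a, ha, rfl⟩
    rw [div_le_iff₀' hC]
    exact (one_mul c).symm.trans_le (h.mul_le_coverCost g0 hC.le hc.le ha.1 ha.2.2)

end Frostman

/-! ### Splitting a measure evenly -/

section Halving

open scoped Function

lemma continuous_measureReal_Iic (m : Measure ℝ) [IsFiniteMeasure m] [NullSingletonClass m] :
    Continuous fun t => m.real (Iic t) := by
  have hone : Integrable (fun _ => (1 : ℝ)) m := integrable_const 1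
  have hprimitive : (fun t => m.real (Iic t)) =
      fun t => m.real (Iic 0) + ∫ _ in (0 : ℝ)..t, (1 : ℝ) ∂m := by
    funext t
    rw [← intervalIntegral.integral_Iic_sub_Iic hone.integrableOn hone.integrableOn]
    simp
  rw [hprimitive]
  exact continuous_const.add (hone.continuous_primitive 0)

lemma tendsto_measureReal_Iic_atTop (m : Measure ℝ) [IsFiniteMeasure m] :
    Tendsto (fun t => m.real (Iic t)) atTop (𝓝 (m.real univ)) :=
  (ENNReal.tendsto_toReal (measure_ne_top m univ)).comp (tendsto_measure_Iic_atTop m)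

lemma tendsto_measureReal_Iic_atBot (m : Measure ℝ) [IsFiniteMeasure m] [NullSingletonClass m] :
    Tendsto (fun t => m.real (Iic t)) atBot (𝓝 0) := by
  have hIci : Tendsto (fun t => m.real (Ici t)) atBot (𝓝 (m.real univ)) :=
    (ENNReal.tendsto_toReal (measure_ne_top m univ)).comp (tendsto_measure_Ici_atBot m)
  refine (sub_self (m.real univ) ▸ tendsto_const_nhds.sub hIci).congr fun t => ?_
  rw [← measureReal_compl measurableSet_Ici, compl_Ici]
  exact congrArg ENNReal.toReal (measure_congr Iio_ae_eq_Iic)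

lemma exists_measure_Iic_eq_half (m : Measure ℝ) [IsFiniteMeasure m] [NullSingletonClass m] :
    ∃ t, m (Iic t) = m univ / 2 := by
  rcases eq_or_ne (m univ) 0 with h0 | h0
  · exact ⟨0, by simp [Measure.measure_univ_eq_zero.1 h0]⟩
  have hpos : 0 < m.real univ := ENNReal.toReal_pos h0 (measure_ne_top m univ)
  obtain ⟨a, ha⟩ :=
    ((tendsto_measureReal_Iic_atBot m).eventually_lt_const (half_pos hpos)).exists
  obtain ⟨b, hb⟩ :=
    ((tendsto_measureReal_Iic_atTop m).eventually_const_lt (half_lt_self hpos)).exists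
  obtain ⟨t, ht⟩ := mem_range_of_exists_le_of_exists_ge (continuous_measureReal_Iic m)
    ⟨a, ha.le⟩ ⟨b, hb.le⟩
  refine ⟨t, (ENNReal.toReal_eq_toReal_iff' (measure_ne_top m _)
    (ENNReal.div_ne_top (measure_ne_top m _) two_ne_zero)).1 ?_⟩
  simpa [measureReal_def] using ht

variable {K : Type*} [MeasurableSpace K]

lemma exists_subset_measure_eq_half [StandardBorelSpace K] (ν : Measure K) [IsFiniteMeasure ν]
    [NullSingletonClass ν] {s : Set K} (hs : MeasurableSet s) :
    ∃ A ⊆ s, MeasurableSet A ∧ ν A = ν s / 2 := by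
  have he := measurableEmbedding_embeddingReal K
  set m := (ν.restrict s).map (embeddingReal K)
  have hm : ∀ S, MeasurableSet S → m S = ν (s ∩ embeddingReal K ⁻¹' S) := fun S hS => by
    rw [Measure.map_apply he.measurable hS, Measure.restrict_apply (he.measurable hS), inter_comm]
  have : NullSingletonClass m := ⟨fun t => by
    have hsub : (embeddingReal K ⁻¹' {t}).Subsingleton :=
      subsingleton_singleton.preimage he.injective
    rw [hm _ (measurableSet_singleton t)]
    exact (hsub.anti inter_subset_right).measure_zero ν⟩
  obtain ⟨t, ht⟩ := exists_measure_Iic_eq_half m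
  rw [hm _ measurableSet_Iic, hm _ MeasurableSet.univ, preimage_univ, inter_univ] at ht
  exact ⟨_, inter_subset_left, hs.inter (he.measurable measurableSet_Iic), ht⟩

lemma measure_inter_biUnion_eq_half {ν : Measure K} {s : Set K} {Q A : ℕ → Set K}
    (hs : MeasurableSet s) (hQ : ∀ n, MeasurableSet (Q n)) (hQd : Pairwise (Disjoint on Q))
    (hA : ∀ n, MeasurableSet (A n)) (hAs : ∀ n, A n ⊆ s ∩ Q n)
    (hhalf : ∀ n, ν (A n) = ν (s ∩ Q n) / 2) (J : Set ℕ) :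
    ν ((⋃ n, A n) ∩ ⋃ n ∈ J, Q n) = ν (s ∩ ⋃ n ∈ J, Q n) / 2 := by
  have hAQ : (⋃ n, A n) ∩ ⋃ n ∈ J, Q n = ⋃ n ∈ J, A n := by
    ext x
    simp only [mem_inter_iff, mem_iUnion, exists_prop]
    constructor
    · rintro ⟨⟨i, hi⟩, j, hj, hxj⟩
      obtain rfl : i = j :=
        by_contra fun hij => disjoint_left.1 (hQd hij) (hAs i hi).2 hxj
      exact ⟨i, hj, hi⟩
    · rintro ⟨j, hj, hx⟩
      exact ⟨⟨j, hx⟩, j, hj, (hAs j hx).2⟩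
  have hsQd : Pairwise (Disjoint on fun n => s ∩ Q n) := fun i j hij =>
    (hQd hij).mono inter_subset_right inter_subset_right
  rw [hAQ, inter_iUnion₂,
    measure_biUnion J.to_countable
      (fun i _ j _ hij => (hsQd hij).mono (hAs i) (hAs j)) fun n _ => hA n,
    measure_biUnion J.to_countable (fun i _ j _ hij => hsQd hij) fun n _ => hs.inter (hQ n)]
  simp only [hhalf, div_eq_mul_inv]
  exact ENNReal.tsum_mul_right

lemma exists_disjoint_halves [StandardBorelSpace K] (ν : Measure K) [IsFiniteMeasure ν]
    [NullSingletonClass ν] {s : Set K} (hs : MeasurableSet s) {Q : ℕ → Set K}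
    (hQ : ∀ n, MeasurableSet (Q n)) (hQd : Pairwise (Disjoint on Q)) :
    ∃ A : Bool → Set K, Disjoint (A true) (A false) ∧ ∀ b, A b ⊆ s ∧ MeasurableSet (A b) ∧
      ∀ J : Set ℕ, ν (A b ∩ ⋃ n ∈ J, Q n) = ν (s ∩ ⋃ n ∈ J, Q n) / 2 := by
  choose A hAs hA hhalf using fun n => exists_subset_measure_eq_half ν (hs.inter (hQ n))
  have hB : ∀ n, MeasurableSet ((s ∩ Q n) \ A n) := fun n => (hs.inter (hQ n)).diff (hA n)
  have hBhalf : ∀ n, ν ((s ∩ Q n) \ A n) = ν (s ∩ Q n) / 2 := fun n => by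
    rw [measure_sdiff (hAs n) (hA n).nullMeasurableSet (measure_ne_top _ _), hhalf,
      ENNReal.sub_half (measure_ne_top _ _)]
  refine ⟨fun b => cond b (⋃ n, A n) (⋃ n, (s ∩ Q n) \ A n), ?_, Bool.forall_bool.2 ⟨⟨?_, ?_, ?_⟩,
    ?_, ?_, ?_⟩⟩
  · refine disjoint_iUnion_left.2 fun i => disjoint_iUnion_right.2 fun j => ?_
    rcases eq_or_ne i j with rfl | hij
    · exact disjoint_sdiff_right
    · exact (hQd hij).mono ((hAs i).trans inter_subset_right)
        (sdiff_subset.trans inter_subset_right)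
  · exact iUnion_subset fun n => sdiff_subset.trans inter_subset_left
  · exact MeasurableSet.iUnion hB
  · exact measure_inter_biUnion_eq_half hs hQ hQd hB (fun n => sdiff_subset) hBhalf
  · exact iUnion_subset fun n => (hAs n).trans inter_subset_left
  · exact MeasurableSet.iUnion hA
  · exact measure_inter_biUnion_eq_half hs hQ hQd hA hAs hhalf

end Halving

section HalvingMetric

variable {K : Type*} [MetricSpace K] [CompactSpace K] [MeasurableSpace K] [BorelSpace K]

lemma exists_disjoint_halves_thickening (ν : Measure K) [IsFiniteMeasure ν]
    [NullSingletonClass ν] {s : Set K} (hs : MeasurableSet s) {η : ℝ} (hη : 0 < η) :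
    ∃ A : Bool → Set K, Disjoint (A true) (A false) ∧ ∀ b, A b ⊆ s ∧ MeasurableSet (A b) ∧
      ν (A b) = ν s / 2 ∧ ∀ U, ν (A b ∩ U) ≤ ν (s ∩ Metric.thickening η U) / 2 := by
  obtain ⟨Q, hQ, hQb, hQη, hQu, hQd⟩ :=
    SeparableSpace.exists_measurable_partition_diam_le K (half_pos hη)
  obtain ⟨A, hAd, hA⟩ := exists_disjoint_halves ν hs hQ hQd
  refine ⟨A, hAd, fun b => ?_⟩
  obtain ⟨hAs, hAm, hhalf⟩ := hA b
  refine ⟨hAs, hAm, ?_, fun U => ?_⟩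
  · simpa [biUnion_univ, hQu] using hhalf univ
  · set J := {n | (Q n ∩ U).Nonempty}
    have hUJ : U ⊆ ⋃ n ∈ J, Q n := fun x hx => by
      obtain ⟨n, hn⟩ := mem_iUnion.1 (hQu ▸ mem_univ x : x ∈ ⋃ n, Q n)
      exact mem_biUnion (show n ∈ J from ⟨x, hn, hx⟩) hn
    have hJU : ⋃ n ∈ J, Q n ⊆ Metric.thickening η U := iUnion₂_subset fun n ⟨y, hy, hyU⟩ x hx =>
      Metric.mem_thickening_iff.2 ⟨y, hyU, (Metric.dist_le_diam_of_mem (hQb n) hx hy).trans_lt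
        ((hQη n).trans_lt (half_lt_self hη))⟩
    calc ν (A b ∩ U) ≤ ν (A b ∩ ⋃ n ∈ J, Q n) := measure_mono (inter_subset_inter_right _ hUJ)
      _ = ν (s ∩ ⋃ n ∈ J, Q n) / 2 := hhalf J
      _ ≤ ν (s ∩ Metric.thickening η U) / 2 :=
        ENNReal.div_le_div_right (measure_mono (inter_subset_inter_right _ hJU)) _

end HalvingMetric

/-! ### Hausdorff measures of real gauges -/

section HausdorffMeasure

variable {Z : Type*} [EMetricSpace Z] {h : ℝ≥0 → ℝ≥0∞}

lemma hausdorffM_apply (h0 : h 0 = 0) (s : Set Z) :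
    hausdorffM h s = ⨆ (r : ℝ≥0∞) (_ : 0 < r), ⨅ (U : ℕ → Set Z) (_ : s ⊆ ⋃ n, U n)
      (_ : ∀ n, Metric.ediam (U n) ≤ r), ∑' n, h (Metric.ediam (U n)).toNNReal := by
  borelize Z
  have hempty : ∀ U : Set Z, (⨆ _ : U.Nonempty, h (Metric.ediam U).toNNReal) =
      h (Metric.ediam U).toNNReal := fun U => by
    rcases U.eq_empty_or_nonempty with rfl | hU
    · simp [h0]
    · rw [iSup_pos hU]
  rw [hausdorffM, ← Measure.mkMetric_toOuterMeasure, Measure.toOuterMeasure_apply,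
    Measure.mkMetric_apply]
  simp only [hempty]

lemma hausdorffM_countable (h0 : h 0 = 0) {s : Set Z} (hs : s.Countable) : hausdorffM h s = 0 := by
  rw [← biUnion_of_singleton s, measure_biUnion_null_iff hs]
  refine fun x _ => le_antisymm ?_ zero_le
  rw [hausdorffM_apply h0]
  refine iSup₂_le fun r _ => iInf₂_le_of_le (fun _ => {x}) (subset_iUnion_of_subset 0 le_rfl)
    (iInf_le_of_le (fun _ => ?_) ?_)
  · rw [Metric.ediam_singleton]
    exact zero_le
  · simp [h0]

lemma borel_le_caratheodory_hausdorffM : borel Z ≤ (hausdorffM h : OuterMeasure Z).caratheodory :=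
  (OuterMeasure.mkMetric'_isMetric _).borel_le_caratheodory

end HausdorffMeasure

section Thickening

variable {α : Type*} [PseudoMetricSpace α]

lemma tendsto_diam_thickening {s : Set α} (hs : Bornology.IsBounded s) :
    Tendsto (fun η => Metric.diam (Metric.thickening η s)) (𝓝[>] 0) (𝓝 (Metric.diam s)) := by
  have hlim : Tendsto (fun η : ℝ => Metric.diam s + 2 * η) (𝓝[>] 0) (𝓝 (Metric.diam s)) :=
    ((by fun_prop : Continuous fun η : ℝ => Metric.diam s + 2 * η).tendsto' 0 _
      (by simp)).mono_left nhdsWithin_le_nhds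
  refine tendsto_of_tendsto_of_tendsto_of_le_of_le' tendsto_const_nhds hlim ?_ ?_
  · filter_upwards [self_mem_nhdsWithin] with η hη
    exact Metric.diam_mono (Metric.self_subset_thickening hη s) hs.thickening
  · filter_upwards [self_mem_nhdsWithin] with η hη
    exact Metric.diam_thickening_le s (le_of_lt hη)

lemma exists_thickening_tsum_lt {ι : Type*} [Countable ι] {G : ℝ → ℝ} (hG : Continuous G)
    {U : ι → Set α} (hU : ∀ i, Bornology.IsBounded (U i)) {c : ℝ≥0∞}
    (hc : ∑' i, ENNReal.ofReal (G (Metric.diam (U i))) < c) :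
    ∃ η : ι → ℝ, (∀ i, 0 < η i) ∧
      ∑' i, ENNReal.ofReal (G (Metric.diam (Metric.thickening (η i) (U i)))) < c := by
  set x := ∑' i, ENNReal.ofReal (G (Metric.diam (U i)))
  obtain ⟨ε, hε, hεc⟩ := ENNReal.exists_pos_sum_of_countable' (tsub_pos_of_lt hc).ne' ι
  have hη : ∀ i, ∃ η : ℝ, ENNReal.ofReal (G (Metric.diam (Metric.thickening η (U i)))) ≤
      ENNReal.ofReal (G (Metric.diam (U i))) + ε i ∧ 0 < η := fun i => by
    have hlim := (((ENNReal.continuous_ofReal.comp hG).tendsto _).comp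
      (tendsto_diam_thickening (hU i))).eventually_le_const
      (ENNReal.lt_add_right ENNReal.ofReal_ne_top (hε i).ne')
    exact (hlim.and self_mem_nhdsWithin).exists
  choose η hle hη using hη
  refine ⟨η, hη, (ENNReal.tsum_le_tsum hle).trans_lt ?_⟩
  calc ∑' i, (ENNReal.ofReal (G (Metric.diam (U i))) + ε i) = x + ∑' i, ε i := ENNReal.tsum_add
    _ < x + (c - x) := (ENNReal.add_lt_add_iff_left hc.ne_top).2 hεc
    _ = c := add_tsub_cancel_of_le hc.le

end Thickening

/-- A real-valued, continuous Hausdorff function vanishing at `0`. It is defined on all of `ℝ`, but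
only its values on `[0, ∞)` matter. -/
structure IsRealGauge (H : ℝ → ℝ) : Prop where
  continuous : Continuous H
  mono : Monotone H
  pos : ∀ t, 0 < t → 0 < H t
  zero : H 0 = 0

lemma IsRealGauge.nonneg {H : ℝ → ℝ} (hH : IsRealGauge H) {t : ℝ} (ht : 0 ≤ t) : 0 ≤ H t :=
  hH.zero ▸ hH.mono ht

lemma IsRealGauge.diam_nonneg {H : ℝ → ℝ} (hH : IsRealGauge H) {α : Type*} [PseudoMetricSpace α]
    (s : Set α) : 0 ≤ H (Metric.diam s) :=
  hH.nonneg Metric.diam_nonneg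

/-- The Hausdorff measure of a real-valued gauge. -/
noncomputable def gaugeMeasure {K : Type*} [MetricSpace K] (H : ℝ → ℝ) : OuterMeasure K :=
  hausdorffM fun t : ℝ≥0 => ENNReal.ofReal (H t)

section GaugeMeasure

variable {K : Type*} [MetricSpace K] {H : ℝ → ℝ} {s : Set K} {c : ℝ≥0∞}

lemma gaugeMeasure_apply (H0 : H 0 = 0) (s : Set K) :
    gaugeMeasure H s = ⨆ (r : ℝ≥0∞) (_ : 0 < r), ⨅ (U : ℕ → Set K) (_ : s ⊆ ⋃ n, U n)
      (_ : ∀ n, Metric.ediam (U n) ≤ r), ∑' n, ENNReal.ofReal (H (Metric.diam (U n))) :=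
  hausdorffM_apply (by simp [H0]) s

lemma exists_cover_of_gaugeMeasure_lt (H0 : H 0 = 0) (hs : gaugeMeasure H s < c) :
    ∃ U : ℕ → Set K, s ⊆ ⋃ n, U n ∧ (∀ n, Bornology.IsBounded (U n)) ∧
      ∑' n, ENNReal.ofReal (H (Metric.diam (U n))) < c := by
  have h := (le_iSup₂ (f := fun (r : ℝ≥0∞) (_ : 0 < r) => ⨅ (U : ℕ → Set K) (_ : s ⊆ ⋃ n, U n)
      (_ : ∀ n, Metric.ediam (U n) ≤ r), ∑' n, ENNReal.ofReal (H (Metric.diam (U n))))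
    1 one_pos).trans_lt ((gaugeMeasure_apply H0 s).symm.trans_lt hs)
  simp only [iInf_lt_iff] at h
  obtain ⟨U, hsU, hU, hlt⟩ := h
  exact ⟨U, hsU, fun n => Metric.isBounded_iff_ediam_ne_top.2
    ((hU n).trans_lt ENNReal.one_lt_top).ne, hlt⟩

lemma exists_isOpen_cover_of_gaugeMeasure_lt (hH : Continuous H) (H0 : H 0 = 0)
    (hs : gaugeMeasure H s < c) :
    ∃ O : ℕ → Set K, (∀ n, IsOpen (O n)) ∧ s ⊆ ⋃ n, O n ∧
      ∑' n, ENNReal.ofReal (H (Metric.diam (O n))) < c := by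
  obtain ⟨U, hsU, hU, hlt⟩ := exists_cover_of_gaugeMeasure_lt H0 hs
  obtain ⟨η, hη, hηc⟩ := exists_thickening_tsum_lt hH hU hlt
  exact ⟨_, fun n => Metric.isOpen_thickening,
    hsU.trans (iUnion_mono fun n => Metric.self_subset_thickening (hη n) _), hηc⟩

lemma gaugeMeasure_le_of_forall_exists_cover [CompactSpace K]
    (hs : ∀ δ > 0, ∃ 𝒰 : Set (Set K), 𝒰.Countable ∧ s ⊆ ⋃₀ 𝒰 ∧ (∀ U ∈ 𝒰, Metric.diam U ≤ δ) ∧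
      ∑' U : 𝒰, ENNReal.ofReal (H (Metric.diam U.1)) ≤ c) : gaugeMeasure H s ≤ c := by
  rw [gaugeMeasure, hausdorffM, OuterMeasure.mkMetric, OuterMeasure.mkMetric']
  simp only [OuterMeasure.iSup_apply]
  refine iSup₂_le fun r hr => ?_
  obtain ⟨δ, hδ, hδr⟩ := ENNReal.lt_iff_exists_nnreal_btwn.1 hr
  obtain ⟨𝒰, h𝒰, hs𝒰, hdiam, hc⟩ := hs δ (mod_cast hδ)
  have hediam : ∀ U ∈ 𝒰, Metric.ediam U ≤ r := fun U hU => by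
    refine le_trans ?_ hδr.le
    rw [← ENNReal.ofReal_toReal (Metric.isBounded_of_compactSpace (s := U)).ediam_ne_top]
    exact ENNReal.ofReal_le_of_le_toReal (hdiam U hU)
  rw [sUnion_eq_biUnion] at hs𝒰
  exact (measure_mono hs𝒰).trans <| (measure_biUnion_le _ h𝒰 id).trans <|
    (ENNReal.tsum_le_tsum fun U : 𝒰 => OuterMeasure.mkMetric'.pre_le (hediam U U.2)).trans hc

end GaugeMeasure

/-! ### Cantor trees of positive Hausdorff measure -/

section CantorTree

variable {α β : Type*}

lemma exists_cantorScheme {P : ℕ → Set α → Prop} {s₀ : Set α} (hs₀ : P 0 s₀)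
    (hP : ∀ n s, P n s → ∃ B : Bool → Set α,
      Disjoint (B true) (B false) ∧ ∀ b, B b ⊆ s ∧ P (n + 1) (B b)) :
    ∃ A : List Bool → Set α, CantorScheme.Antitone A ∧ CantorScheme.Disjoint A ∧
      ∀ l, P l.length (A l) := by
  choose B hdisj hB using hP
  let node : (l : List Bool) → {s : Set α // P l.length s} := fun l =>
    List.rec ⟨s₀, hs₀⟩ (fun b l s => ⟨B l.length s.1 s.2 b, (hB _ _ _ b).2⟩) l
  refine ⟨fun l => (node l).1, fun l b => (hB _ _ _ b).1, fun l => ?_, fun l => (node l).2⟩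
  rintro (_ | _) (_ | _) hab
  · exact absurd rfl hab
  · exact (hdisj _ _ (node l).2).symm
  · exact hdisj _ _ (node l).2
  · exact absurd rfl hab

lemma antitone_cantorScheme_res {A : List β → Set α} (hA : CantorScheme.Antitone A) (x : ℕ → β) :
    Antitone fun n => A (PiNat.res x n) :=
  antitone_nat_of_succ_le fun n => by
    rw [PiNat.res_succ]
    exact hA _ _

lemma disjoint_iInter_cantorScheme_res {A : List β → Set α} (hA : CantorScheme.Disjoint A)
    {x y : ℕ → β} (hxy : x ≠ y) :
    Disjoint (⋂ n, A (PiNat.res x n)) (⋂ n, A (PiNat.res y n)) := by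
  rw [Set.disjoint_left]
  intro z hzx hzy
  rw [mem_iInter] at hzx hzy
  refine hxy (PiNat.res_injective (funext fun n => ?_))
  induction n with
  | zero => rfl
  | succ n ih =>
    have hx := hzx (n + 1)
    have hy := hzy (n + 1)
    rw [PiNat.res_succ] at hx hy
    rw [← ih] at hy
    rw [PiNat.res_succ, PiNat.res_succ, ← ih,
      (hA _).eq (Set.not_disjoint_iff.2 ⟨z, hx, hy⟩)]

end CantorTree

lemma exists_thickening_diam_le_mul {K : Type*} [PseudoMetricSpace K] [CompactSpace K]
    {H : ℝ → ℝ} (hH : IsRealGauge H) {c δ : ℝ} (hc : 1 < c) (hδ : 0 < δ) :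
    ∃ η > 0, ∀ U : Set K, δ ≤ Metric.diam U →
      H (Metric.diam (Metric.thickening η U)) ≤ c * H (Metric.diam U) := by
  have hgap : 0 < (c - 1) * H δ := mul_pos (sub_pos.2 hc) (hH.pos δ hδ)
  have hIcc : IsCompact (Icc 0 (Metric.diam (univ : Set K) + 1)) := isCompact_Icc
  obtain ⟨η', hη', hunif⟩ := Metric.uniformContinuousOn_iff.1
    (hIcc.uniformContinuousOn_of_continuous hH.continuous.continuousOn) _ hgap
  obtain ⟨η, hη, hη'η⟩ := exists_between (lt_min (half_pos hη') (half_pos one_pos))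
  obtain ⟨hηη', hη1⟩ := lt_min_iff.1 hη'η
  refine ⟨η, hη, fun U hU => ?_⟩
  have hUK : Metric.diam U ≤ Metric.diam (univ : Set K) :=
    Metric.diam_mono (subset_univ _) Metric.isBounded_of_compactSpace
  have hU0 : 0 ≤ Metric.diam U := Metric.diam_nonneg
  have hdist := hunif (Metric.diam U + 2 * η) ⟨by positivity, by linarith⟩ (Metric.diam U)
    ⟨hU0, by linarith⟩ (by rw [Real.dist_eq, abs_of_nonneg] <;> linarith)
  rw [Real.dist_eq] at hdist
  calc H (Metric.diam (Metric.thickening η U)) ≤ H (Metric.diam U + 2 * η) :=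
        hH.mono (Metric.diam_thickening_le U hη.le)
    _ ≤ H (Metric.diam U) + (c - 1) * H δ := by
        linarith [(le_abs_self _).trans hdist.le]
    _ ≤ H (Metric.diam U) + (c - 1) * H (Metric.diam U) := by
        gcongr
        exact hH.mono hU
    _ = c * H (Metric.diam U) := by ring

/-- The density conditions on a measure `ν` under which its support can be split into a Cantor tree
whose branches have positive `H`-measure: the Frostman bound, with vanishing density at small
scales. -/
structure IsFrostmanMeasure {K : Type*} [MetricSpace K] [MeasurableSpace K] (H : ℝ → ℝ)
    (ν : Measure K) : Prop where
  le : ∀ U, IsOpen U → ν U ≤ ENNReal.ofReal (H (Metric.diam U))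
  small : ∀ ε > 0, ∃ δ > 0, ∀ U, IsOpen U → Metric.diam U < δ →
    ν U ≤ ENNReal.ofReal (ε * H (Metric.diam U))

/-- The invariant of a node `s` at level `n` of the Cantor tree: its mass has been halved about `n`
times, and so has the Frostman bound, up to a factor below `2`. -/
structure IsFrostmanNode {K : Type*} [MetricSpace K] [MeasurableSpace K] (H : ℝ → ℝ)
    (ν : Measure K) (a : ℝ≥0∞) (n : ℕ) (s : Set K) : Prop where
  isCompact : IsCompact s
  lt_mass : a < 2 ^ n * ν s
  le : ∃ C : ℝ, 1 ≤ C ∧ C < 2 ∧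
    ∀ U, IsOpen U → 2 ^ n * ν (s ∩ U) ≤ ENNReal.ofReal (C * H (Metric.diam U))

section FrostmanTree

variable {K : Type*} [MetricSpace K] [MeasurableSpace K] {H : ℝ → ℝ} {ν : Measure K}

lemma IsFrostmanMeasure.nullSingletonClass (hν : IsFrostmanMeasure H ν) (hH : IsRealGauge H) :
    NullSingletonClass ν where
  measure_singleton x := by
    have hlim := (ENNReal.continuous_ofReal.comp hH.continuous).tendsto _ |>.comp
      (tendsto_diam_thickening (Bornology.isBounded_singleton (x := x)))
    have hzero : (ENNReal.ofReal ∘ H) (Metric.diam {x}) = 0 := by simp [hH.zero]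
    rw [hzero] at hlim
    refine le_antisymm (ge_of_tendsto hlim ?_) zero_le
    filter_upwards [self_mem_nhdsWithin] with η hη
    exact (measure_mono (Metric.self_subset_thickening hη _)).trans
      (hν.le _ Metric.isOpen_thickening)

variable {a : ℝ≥0∞} {n : ℕ} {s : Set K}

lemma two_pow_succ_mul_half (n : ℕ) (z : ℝ≥0∞) : 2 ^ (n + 1) * (z / 2) = 2 ^ n * z := by
  rw [pow_succ, mul_assoc, ENNReal.mul_div_cancel two_ne_zero ENNReal.ofNat_ne_top]

lemma IsFrostmanNode.exists_bound_of_thickening [CompactSpace K] (hν : IsFrostmanMeasure H ν)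
    (hH : IsRealGauge H) (hs : IsFrostmanNode H ν a n s) :
    ∃ η > 0, ∃ C : ℝ, 1 ≤ C ∧ C < 2 ∧ ∀ A : Set K,
      (∀ U, ν (A ∩ U) ≤ ν (s ∩ Metric.thickening η U) / 2) →
      ∀ U, IsOpen U → 2 ^ (n + 1) * ν (A ∩ U) ≤ ENNReal.ofReal (C * H (Metric.diam U)) := by
  obtain ⟨C, hC1, hC2, hC⟩ := hs.le
  obtain ⟨δ, hδ, hsmall⟩ := hν.small (1 / 2 ^ (n + 1)) (by positivity)
  obtain ⟨C', hCC', hC'2⟩ := exists_between hC2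
  obtain ⟨η, hη, hlarge⟩ := exists_thickening_diam_le_mul (K := K) hH
    ((one_lt_div (by linarith)).2 hCC') hδ
  refine ⟨η, hη, C', by linarith, hC'2, fun A hA U hU => ?_⟩
  rcases lt_or_ge (Metric.diam U) δ with hUδ | hUδ
  · calc 2 ^ (n + 1) * ν (A ∩ U)
        ≤ 2 ^ (n + 1) * ENNReal.ofReal (1 / 2 ^ (n + 1) * H (Metric.diam U)) := by
          gcongr
          exact (measure_mono inter_subset_right).trans (hsmall U hU hUδ)
      _ = ENNReal.ofReal (2 ^ (n + 1) * (1 / 2 ^ (n + 1) * H (Metric.diam U))) := by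
          rw [ENNReal.ofReal_mul (p := 2 ^ (n + 1)) (by positivity), ENNReal.ofReal_pow two_pos.le,
            ENNReal.ofReal_ofNat]
      _ ≤ ENNReal.ofReal (C' * H (Metric.diam U)) := by
          rw [← mul_assoc, mul_one_div_cancel (by positivity)]
          exact ENNReal.ofReal_le_ofReal
            (mul_le_mul_of_nonneg_right (by linarith) (hH.diam_nonneg U))
  · calc 2 ^ (n + 1) * ν (A ∩ U) ≤ 2 ^ (n + 1) * (ν (s ∩ Metric.thickening η U) / 2) := by
          gcongr
          exact hA U
      _ = 2 ^ n * ν (s ∩ Metric.thickening η U) := two_pow_succ_mul_half _ _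
      _ ≤ ENNReal.ofReal (C * H (Metric.diam (Metric.thickening η U))) :=
          hC _ Metric.isOpen_thickening
      _ ≤ ENNReal.ofReal (C * (C' / C * H (Metric.diam U))) := by
          gcongr
          exact hlarge U hUδ
      _ = ENNReal.ofReal (C' * H (Metric.diam U)) := by
          rw [← mul_assoc, mul_div_cancel₀ _ (by linarith)]

lemma IsFrostmanNode.exists_split [CompactSpace K] [BorelSpace K] [IsFiniteMeasure ν]
    (hν : IsFrostmanMeasure H ν) (hH : IsRealGauge H) (hs : IsFrostmanNode H ν a n s) :
    ∃ B : Bool → Set K, Disjoint (B true) (B false) ∧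
      ∀ b, B b ⊆ s ∧ IsFrostmanNode H ν a (n + 1) (B b) := by
  have := hν.nullSingletonClass hH
  obtain ⟨η, hη, C, hC1, hC2, hC⟩ := hs.exists_bound_of_thickening hν hH
  obtain ⟨A, hdisj, hA⟩ := exists_disjoint_halves_thickening ν hs.isCompact.measurableSet hη
  have hlt : ∀ b, a / 2 ^ (n + 1) < ν (A b) := fun b => by
    rw [ENNReal.div_lt_iff (by simp) (by simp), (hA b).2.2.1, mul_comm, two_pow_succ_mul_half]
    exact hs.lt_mass
  choose B hBA hB hlt using fun b =>
    (hA b).2.1.exists_lt_isCompact_of_ne_top (measure_ne_top ν _) (hlt b)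
  refine ⟨B, hdisj.mono (hBA true) (hBA false), fun b => ⟨(hBA b).trans (hA b).1, hB b, ?_, C, hC1,
    hC2, hC (B b) fun U => ?_⟩⟩
  · rw [mul_comm]
    exact (ENNReal.div_lt_iff (by simp) (by simp)).1 (hlt b)
  · exact (measure_mono (inter_subset_inter_left _ (hBA b))).trans ((hA b).2.2.2 U)

lemma IsFrostmanNode.lt_two_mul_tsum (hs : IsFrostmanNode H ν a n s) {O : ℕ → Set K}
    (hO : ∀ i, IsOpen (O i)) (hsO : s ⊆ ⋃ i, O i) :
    a < 2 * ∑' i, ENNReal.ofReal (H (Metric.diam (O i))) := by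
  obtain ⟨C, hC1, hC2, hC⟩ := hs.le
  calc a < 2 ^ n * ν s := hs.lt_mass
    _ ≤ 2 ^ n * ∑' i, ν (s ∩ O i) := by
        gcongr
        refine (measure_mono ?_).trans (measure_iUnion_le _)
        rw [← inter_iUnion]
        exact subset_inter le_rfl hsO
    _ = ∑' i, 2 ^ n * ν (s ∩ O i) := ENNReal.tsum_mul_left.symm
    _ ≤ ∑' i, 2 * ENNReal.ofReal (H (Metric.diam (O i))) := by
        refine ENNReal.tsum_le_tsum fun i => (hC _ (hO i)).trans ?_
        rw [ENNReal.ofReal_mul (by linarith)]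
        gcongr
        exact ENNReal.ofReal_le_of_le_toReal (by simpa using hC2.le)
    _ = 2 * ∑' i, ENNReal.ofReal (H (Metric.diam (O i))) := ENNReal.tsum_mul_left

lemma gaugeMeasure_iInter_pos_of_isFrostmanNode (hH : IsRealGauge H) (ha : 0 < a)
    {S : ℕ → Set K} (hanti : Antitone S) (hS : ∀ n, IsFrostmanNode H ν a n (S n)) :
    0 < gaugeMeasure H (⋂ n, S n) := by
  have ha2 : 0 < a / 2 := ENNReal.div_pos ha.ne' ENNReal.ofNat_ne_top
  refine ha2.trans_le (not_lt.1 fun hlt => ?_)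
  obtain ⟨O, hO, hSO, hsum⟩ := exists_isOpen_cover_of_gaugeMeasure_lt hH.continuous hH.zero hlt
  obtain ⟨n, hn⟩ := exists_subset_nhds_of_isCompact' hanti.directed_ge (fun n => (hS n).isCompact)
    (fun n => (hS n).isCompact.isClosed) fun x hx => (isOpen_iUnion hO).mem_nhds (hSO hx)
  refine ((hS n).lt_two_mul_tsum hO hn).not_ge ?_
  calc 2 * ∑' i, ENNReal.ofReal (H (Metric.diam (O i))) ≤ 2 * (a / 2) := by gcongr
    _ = a := ENNReal.mul_div_cancel two_ne_zero ENNReal.ofNat_ne_top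

theorem IsFrostmanMeasure.exists_disjoint_compact_family [CompactSpace K] [BorelSpace K]
    [IsFiniteMeasure ν] (hν : IsFrostmanMeasure H ν) (hH : IsRealGauge H) (hν0 : 0 < ν univ) :
    ∃ T : (ℕ → Bool) → Set K, (∀ x, IsCompact (T x)) ∧ Pairwise (Function.onFun Disjoint T) ∧
      ∀ x, 0 < gaugeMeasure H (T x) := by
  obtain ⟨a, ha0, ha⟩ := exists_between hν0
  have hroot : IsFrostmanNode H ν a 0 univ :=
    ⟨isCompact_univ, by simpa using ha, 1, le_rfl, one_lt_two, by simpa using hν.le⟩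
  obtain ⟨A, hanti, hdisj, hA⟩ := exists_cantorScheme hroot fun n s hs => hs.exists_split hν hH
  have hnode : ∀ x n, IsFrostmanNode H ν a n (A (PiNat.res x n)) := fun x n => by
    simpa only [PiNat.res_length] using hA (PiNat.res x n)
  exact ⟨fun x => ⋂ n, A (PiNat.res x n),
    fun x => (isClosed_iInter fun n => (hnode x n).isCompact.isClosed).isCompact,
    fun x y hxy => disjoint_iInter_cantorScheme_res hdisj hxy,
    fun x => gaugeMeasure_iInter_pos_of_isFrostmanNode hH ha0
      (antitone_cantorScheme_res hanti x) (hnode x)⟩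

end FrostmanTree

/-! ### Content modulo sets of σ-finite measure -/

section SigmaFiniteCover

/-- `S` is covered by countably many sets of finite outer measure. Unlike in `SigmaFiniteSet`, these
sets need not be measurable, which makes the notion monotone in `S`. -/
def HasSigmaFiniteCover {α : Type*} (μ : OuterMeasure α) (S : Set α) : Prop :=
  ∃ 𝒜 : Set (Set α), 𝒜.Countable ∧ (∀ A ∈ 𝒜, μ A < ⊤) ∧ S ⊆ ⋃₀ 𝒜

variable {α : Type*} {μ : OuterMeasure α} {S T : Set α}

lemma HasSigmaFiniteCover.mono (hT : HasSigmaFiniteCover μ T) (hST : S ⊆ T) :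
    HasSigmaFiniteCover μ S :=
  let ⟨𝒜, h𝒜, hμ, hT𝒜⟩ := hT
  ⟨𝒜, h𝒜, hμ, hST.trans hT𝒜⟩

lemma HasSigmaFiniteCover.of_lt_top (hS : μ S < ⊤) : HasSigmaFiniteCover μ S :=
  ⟨{S}, countable_singleton S, fun _ hA => hA ▸ hS, by rw [sUnion_singleton]⟩

lemma HasSigmaFiniteCover.union (hS : HasSigmaFiniteCover μ S) (hT : HasSigmaFiniteCover μ T) :
    HasSigmaFiniteCover μ (S ∪ T) :=
  let ⟨𝒜, h𝒜, h𝒜μ, hS𝒜⟩ := hS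
  let ⟨ℬ, hℬ, hℬμ, hTℬ⟩ := hT
  ⟨𝒜 ∪ ℬ, h𝒜.union hℬ, fun A hA => hA.elim (h𝒜μ A) (hℬμ A),
    sUnion_union 𝒜 ℬ ▸ union_subset_union hS𝒜 hTℬ⟩

lemma HasSigmaFiniteCover.iUnion {ι : Type*} [Countable ι] {S : ι → Set α}
    (hS : ∀ i, HasSigmaFiniteCover μ (S i)) : HasSigmaFiniteCover μ (⋃ i, S i) := by
  choose 𝒜 h𝒜 hμ hS𝒜 using hS
  refine ⟨⋃ i, 𝒜 i, countable_iUnion h𝒜, fun A hA => ?_, ?_⟩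
  · obtain ⟨i, hi⟩ := mem_iUnion.1 hA
    exact hμ i A hi
  · rw [sUnion_iUnion]
    exact iUnion_mono hS𝒜

end SigmaFiniteCover

/-- The infimum of `∑ G (diam U)` over the countable families that cover `K` up to a set of
σ-finite `H`-measure. -/
noncomputable def essContent (K : Type*) [MetricSpace K] (H G : ℝ → ℝ) : ℝ≥0∞ :=
  ⨅ (𝒰 : Set (Set K)) (_ : 𝒰.Countable) (_ : HasSigmaFiniteCover (gaugeMeasure H) (⋃₀ 𝒰)ᶜ),
    ∑' U : 𝒰, ENNReal.ofReal (G (Metric.diam U.1))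

section EssContent

variable {K : Type*} [MetricSpace K] {H G : ℝ → ℝ}

lemma tsum_range_le_tsum {ι β : Type*} (f : β → ℝ≥0∞) (u : ι → β) :
    ∑' b : range u, f b ≤ ∑' i, f (u i) :=
  ENNReal.tsum_le_tsum_comp_of_surjective rangeFactorization_surjective _

lemma essContent_le_tsum {ι : Type*} [Countable ι] {U : ι → Set K}
    (hU : HasSigmaFiniteCover (gaugeMeasure H) (⋃ i, U i)ᶜ) :
    essContent K H G ≤ ∑' i, ENNReal.ofReal (G (Metric.diam (U i))) :=
  (iInf_le_of_le (range U) (iInf₂_le (countable_range U) (by rwa [sUnion_range]))).trans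
    (tsum_range_le_tsum (fun s => ENNReal.ofReal (G (Metric.diam s))) U)

variable [CompactSpace K]

lemma subsingleton_of_diam_eq_zero {s : Set K} (hs : Metric.diam s = 0) : s.Subsingleton := by
  rw [← Metric.ediam_eq_zero_iff, ← ENNReal.ofReal_toReal
    (Metric.isBounded_of_compactSpace (s := s)).ediam_ne_top]
  exact ENNReal.ofReal_eq_zero.2 hs.le

lemma exists_cover_of_essContent_lt (H0 : H 0 = 0) {c : ℝ≥0∞} (hc : essContent K H G < c) :
    ∃ 𝒰 : Set (Set K), 𝒰.Countable ∧ (∀ U ∈ 𝒰, 0 < Metric.diam U) ∧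
      HasSigmaFiniteCover (gaugeMeasure H) (⋃₀ 𝒰)ᶜ ∧
      ∑' U : 𝒰, ENNReal.ofReal (G (Metric.diam U.1)) < c := by
  simp only [essContent, iInf_lt_iff] at hc
  obtain ⟨𝒰, h𝒰, hcover, hsum⟩ := hc
  have hsub : {U ∈ 𝒰 | 0 < Metric.diam U} ⊆ 𝒰 := sep_subset _ _
  have hnull : gaugeMeasure H (⋃₀ {U ∈ 𝒰 | Metric.diam U = 0}) = 0 :=
    hausdorffM_countable (by simp [H0]) <| (h𝒰.mono (sep_subset _ _)).sUnion
      fun U hU => (subsingleton_of_diam_eq_zero hU.2).countable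
  refine ⟨_, h𝒰.mono hsub, fun U hU => hU.2,
    (hcover.union (.of_lt_top (hnull.trans_lt ENNReal.zero_lt_top))).mono fun x hx => ?_,
    (ENNReal.tsum_mono_subtype (fun U => ENNReal.ofReal (G (Metric.diam U))) hsub).trans_lt hsum⟩
  by_cases hx𝒰 : x ∈ ⋃₀ 𝒰
  · obtain ⟨U, hU, hxU⟩ := hx𝒰
    exact .inr ⟨U, ⟨hU, le_antisymm (not_lt.1 fun hpos => hx ⟨U, ⟨hU, hpos⟩, hxU⟩)
      Metric.diam_nonneg⟩, hxU⟩
  · exact .inl hx𝒰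

theorem essContent_self_pos (hH : IsRealGauge H)
    (hK : ¬HasSigmaFiniteCover (gaugeMeasure H) (univ : Set K)) : 0 < essContent K H H := by
  refine pos_iff_ne_zero.2 fun hzero => hK ?_
  have hpos : ∀ n : ℕ, (0 : ℝ) < min 1 (H (1 / (n + 1))) := fun n =>
    lt_min one_pos (hH.pos _ Nat.one_div_pos_of_nat)
  choose 𝒰 h𝒰 _ hcover hsum using fun n => exists_cover_of_essContent_lt hH.zero
    (hzero.trans_lt (ENNReal.ofReal_pos.2 (hpos n)))
  have hdiam : ∀ n, ∀ U ∈ 𝒰 n, Metric.diam U < 1 / (n + 1) := fun n U hU => by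
    have hlt := (ENNReal.le_tsum (⟨U, hU⟩ : 𝒰 n)).trans_lt (hsum n)
    exact hH.mono.reflect_lt
      (((ENNReal.ofReal_lt_ofReal_iff (hpos n)).1 hlt).trans_le (min_le_right _ _))
  have hcommon : gaugeMeasure H (⋂ n, ⋃₀ 𝒰 n) ≤ 1 := by
    refine gaugeMeasure_le_of_forall_exists_cover fun δ hδ => ?_
    obtain ⟨n, hn⟩ := exists_nat_one_div_lt hδ
    refine ⟨𝒰 n, h𝒰 n, iInter_subset _ n, fun U hU => ((hdiam n U hU).trans hn).le,
      (hsum n).le.trans ?_⟩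
    exact ENNReal.ofReal_le_one.2 (min_le_left _ _)
  refine ((HasSigmaFiniteCover.iUnion hcover).union
    (.of_lt_top (hcommon.trans_lt ENNReal.one_lt_top))).mono ?_
  rw [← compl_iInter, compl_union_self]

end EssContent

/-- A continuous cutoff equal to `1 / 2` on `[0, δ]` and to `1` on `[2 * δ, ∞)`. -/
noncomputable def cutoff (δ t : ℝ) : ℝ := min 1 (max (1 / 2) (t / (2 * δ)))

section Cutoff

variable {δ t : ℝ}

lemma half_le_cutoff (δ t : ℝ) : 1 / 2 ≤ cutoff δ t :=
  le_min (by norm_num) (le_max_left _ _)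

lemma cutoff_le_one (δ t : ℝ) : cutoff δ t ≤ 1 := min_le_left _ _

lemma cutoff_nonneg (δ t : ℝ) : 0 ≤ cutoff δ t := one_half_pos.le.trans (half_le_cutoff δ t)

lemma cutoff_eq_one (hδ : 0 < δ) (ht : 2 * δ ≤ t) : cutoff δ t = 1 :=
  min_eq_left (le_max_of_le_right ((one_le_div (by positivity)).2 ht))

lemma cutoff_eq_half (hδ : 0 < δ) (ht : t ≤ δ) : cutoff δ t = 1 / 2 := by
  have hle : t / (2 * δ) ≤ 1 / 2 := by
    rw [div_le_div_iff₀ (by positivity) two_pos]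
    linarith
  rw [cutoff, max_eq_left hle, min_eq_right (by norm_num)]

lemma continuous_cutoff (δ : ℝ) : Continuous (cutoff δ) := by
  unfold cutoff
  fun_prop

lemma monotone_cutoff (hδ : 0 < δ) : Monotone (cutoff δ) := fun s t hst => by
  unfold cutoff
  gcongr

lemma tendsto_mul_cutoff {α : Type*} {l : Filter α} {G : ℝ → ℝ} (hG : Continuous G) (G0 : G 0 = 0)
    {δ d : α → ℝ} (hδ : Tendsto δ l (𝓝[>] 0)) {e : ℝ} (hd : Tendsto d l (𝓝 e)) (he : 0 ≤ e) :
    Tendsto (fun n => G (d n) * cutoff (δ n) (d n)) l (𝓝 (G e)) := by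
  have hGd : Tendsto (fun n => G (d n)) l (𝓝 (G e)) := (hG.tendsto e).comp hd
  obtain ⟨hδ0, hδpos⟩ := tendsto_nhdsWithin_iff.1 hδ
  rcases he.eq_or_lt with rfl | he
  · rw [G0] at hGd ⊢
    refine squeeze_zero_norm (fun n => ?_) (tendsto_zero_iff_norm_tendsto_zero.1 hGd)
    rw [norm_mul, Real.norm_of_nonneg (cutoff_nonneg _ _)]
    exact mul_le_of_le_one_right (norm_nonneg _) (cutoff_le_one _ _)
  · have hlarge : ∀ᶠ n in l, 2 * δ n < d n :=
      (hδ0.const_mul 2).eventually_lt hd (by rwa [mul_zero])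
    refine hGd.congr' ?_
    filter_upwards [hlarge, hδpos] with n hn hpos
    rw [cutoff_eq_one hpos hn.le, mul_one]

lemma ofReal_le_mul_cutoff {H G : ℝ → ℝ} {θ : ℝ} (hθ : 0 < θ) (hH : 0 ≤ H t)
    (hHG : θ * H t ≤ G t) (δ : ℝ) :
    ENNReal.ofReal (H t) ≤ ENNReal.ofReal (2 / θ) * ENNReal.ofReal (G t * cutoff δ t) := by
  rw [← ENNReal.ofReal_mul (by positivity)]
  refine ENNReal.ofReal_le_ofReal ?_
  calc H t = 2 / θ * (θ * H t * (1 / 2)) := by field_simp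
    _ ≤ 2 / θ * (G t * cutoff δ t) := by
        gcongr
        · exact (mul_nonneg hθ.le hH).trans hHG
        · exact half_le_cutoff δ t

end Cutoff

section DyadicReindexing

variable {H : ℝ → ℝ}

lemma exists_injective_sigma_fin {ι : Type*} {N : ℕ → ℕ} (cls : ι → ℕ)
    (hN : ∀ j, {i | cls i = j}.encard ≤ N j) :
    ∃ e : ι → Σ j, Fin (N j), Function.Injective e ∧ ∀ i, (e i).1 = cls i := by
  have hemb : ∀ j, Nonempty ({i // cls i = j} ↪ Fin (N j)) := fun j => by
    have hfin : Finite {i // cls i = j} := Set.finite_of_encard_le_coe (hN j)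
    have := Fintype.ofFinite {i // cls i = j}
    refine Function.Embedding.nonempty_of_card_le ?_
    rw [Fintype.card_fin, ← Nat.card_eq_fintype_card]
    exact_mod_cast (Set.Finite.cast_ncard_eq (s := {i | cls i = j}) hfin).trans_le (hN j)
  exact ⟨(Equiv.sigmaFiberEquiv cls).symm.toEmbedding.trans
    (Function.Embedding.sigmaMap (.refl ℕ) fun j => (hemb j).some), Function.Embedding.injective _,
    fun i => rfl⟩

lemma encard_setOf_le_le_floor {ι : Type*} {a : ι → ℝ≥0∞} {C ε : ℝ≥0∞} (hC : C ≠ ⊤)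
    (hsum : ∑' i, a i ≤ C) (hε : ε ≠ 0) : {i | ε ≤ a i}.encard ≤ (⌊(C / ε).toReal⌋₊ : ℕ) := by
  obtain ⟨hfin, hcard⟩ := ENNReal.finset_card_const_le_le_of_tsum_le hC hsum hε
  rw [hfin.encard_eq_coe_toFinset_card, Nat.cast_le]
  refine Nat.le_floor ?_
  rw [← ENNReal.toReal_natCast]
  exact ENNReal.toReal_mono (ENNReal.div_ne_top hC hε) hcard

lemma exists_dyadic_injection (hH : IsRealGauge H) (D : ℝ) {C : ℝ≥0∞} (hC : C ≠ ⊤) :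
    ∃ N : ℕ → ℕ, ∀ {ι : Type u} (d : ι → ℝ), (∀ i, 0 < d i) → (∀ i, d i ≤ D) →
      ∑' i, ENNReal.ofReal (H (d i)) ≤ C →
      ∃ e : ι → Σ j, Fin (N j), Function.Injective e ∧ ∀ i, d i ≤ D / 2 ^ (e i).1 := by
  refine ⟨fun j => ⌊(C / ENNReal.ofReal (H (D / 2 ^ (j + 1)))).toReal⌋₊,
    fun {ι} d hd0 hdD hsum => ?_⟩
  have hcls : ∀ i, ∃ j : ℕ, D / 2 ^ (j + 1) < d i ∧ d i ≤ D / 2 ^ j := fun i => by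
    have hD : 0 < D := (hd0 i).trans_le (hdD i)
    obtain ⟨j, hlt, hle⟩ := exists_nat_pow_near_of_lt_one (div_pos (hd0 i) hD)
      ((div_le_one hD).2 (hdD i)) one_half_pos one_half_lt_one
    rw [lt_div_iff₀ hD] at hlt
    rw [div_le_iff₀ hD] at hle
    refine ⟨j, lt_of_eq_of_lt ?_ hlt, hle.trans_eq ?_⟩ <;> rw [one_div_pow] <;> ring
  choose cls hlt hle using hcls
  have hfibre : ∀ j, {i | cls i = j}.encard ≤
      (⌊(C / ENNReal.ofReal (H (D / 2 ^ (j + 1)))).toReal⌋₊ : ℕ) := fun j => by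
    rcases {i | cls i = j}.eq_empty_or_nonempty with hempty | ⟨i₀, -⟩
    · simp [hempty]
    have hD : 0 < D := (hd0 i₀).trans_le (hdD i₀)
    refine (encard_le_encard fun i hi => ?_).trans
      (encard_setOf_le_le_floor hC hsum (ENNReal.ofReal_pos.2 (hH.pos _ (by positivity))).ne')
    exact ENNReal.ofReal_le_ofReal (hH.mono (hi ▸ (hlt i).le))
  obtain ⟨e, he, hecls⟩ := exists_injective_sigma_fin cls hfibre
  exact ⟨e, he, fun i => (hecls i).symm ▸ hle i⟩

variable {K : Type u} [MetricSpace K]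

lemma exists_dyadic_reindexing [CompactSpace K] (hH : IsRealGauge H) {C : ℝ≥0∞} (hC : C ≠ ⊤) :
    ∃ N : ℕ → ℕ, ∀ 𝒰 : Set (Set K), (∀ U ∈ 𝒰, 0 < Metric.diam U) →
      ∑' U : 𝒰, ENNReal.ofReal (H (Metric.diam U.1)) ≤ C →
      ∃ W : (Σ j, Fin (N j)) → Set K,
        (∀ t, Metric.diam (W t) ≤ Metric.diam (univ : Set K) / 2 ^ t.1) ∧ ⋃ t, W t = ⋃₀ 𝒰 ∧
        ∀ G : ℝ → ℝ, G 0 = 0 → ∑' t, ENNReal.ofReal (G (Metric.diam (W t))) =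
          ∑' U : 𝒰, ENNReal.ofReal (G (Metric.diam U.1)) := by
  obtain ⟨N, hN⟩ := exists_dyadic_injection hH (Metric.diam (univ : Set K)) hC
  refine ⟨N, fun 𝒰 hpos hsum => ?_⟩
  obtain ⟨e, he, hdiam⟩ := hN (fun U : 𝒰 => Metric.diam U.1) (fun U => hpos U U.2)
    (fun U => Metric.diam_mono (subset_univ _) Metric.isBounded_of_compactSpace) hsum
  have hW : ∀ U, Function.extend e Subtype.val (fun _ => ∅) (e U) = U.1 := fun U =>
    he.extend_apply _ _ U
  have hempty : ∀ t ∉ range e, Function.extend e (Subtype.val (p := (· ∈ 𝒰))) (fun _ => ∅) t = ∅ :=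
    fun t ht => Function.extend_apply' _ _ _ ht
  refine ⟨Function.extend e Subtype.val fun _ => ∅, fun t => ?_, ?_, fun G G0 => ?_⟩
  · by_cases ht : t ∈ range e
    · obtain ⟨U, rfl⟩ := ht
      exact (hW U).symm ▸ hdiam U
    · rw [hempty t ht, Metric.diam_empty]
      positivity
  · rw [sUnion_eq_iUnion]
    refine Subset.antisymm (iUnion_subset fun t => ?_) (iUnion_subset fun U => ?_)
    · by_cases ht : t ∈ range e
      · obtain ⟨U, rfl⟩ := ht
        exact (hW U).symm ▸ subset_iUnion Subtype.val U
      · exact (hempty t ht).symm ▸ empty_subset _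
    · exact (hW U).symm.subset.trans (subset_iUnion _ (e U))
  · rw [← he.tsum_eq (Function.support_subset_iff'.2 fun t ht => ?_)]
    · exact tsum_congr fun U => by rw [hW]
    · rw [hempty t ht, Metric.diam_empty, G0, ENNReal.ofReal_zero]

end DyadicReindexing

section Limits

lemma tsum_le_of_tendsto {α T : Type*} {l : Filter α} [l.NeBot] {f : α → T → ℝ≥0∞}
    {g : T → ℝ≥0∞} {c : ℝ≥0∞} (hf : ∀ t, Tendsto (fun n => f n t) l (𝓝 (g t)))
    (hc : ∀ n, ∑' t, f n t ≤ c) : ∑' t, g t ≤ c := by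
  rw [ENNReal.tsum_eq_iSup_sum]
  exact iSup_le fun s => le_of_tendsto' (tendsto_finsetSum s fun t _ => hf t)
    fun n => (ENNReal.sum_le_tsum s).trans (hc n)

variable {K : Type*} [MetricSpace K]

lemma subset_thickening_of_hausdorffEDist_lt {s t : Set K} {η : ℝ} (hη : 0 < η)
    (hst : Metric.hausdorffEDist s t < ENNReal.ofReal η) : s ⊆ Metric.thickening η t := by
  intro x hx
  obtain ⟨y, hy, hxy⟩ := Metric.exists_edist_lt_of_hausdorffEDist_lt hx hst
  rw [edist_dist, ENNReal.ofReal_lt_ofReal_iff hη] at hxy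
  exact Metric.mem_thickening_iff.2 ⟨y, hy, hxy⟩

variable [CompactSpace K]

lemma exists_tendsto_diam_of_ultrafilter {α : Type*} (l : Ultrafilter α) (W : α → Set K) :
    ∃ F : Set K, Tendsto (fun n => Metric.diam (W n)) l (𝓝 (Metric.diam F)) ∧
      ∀ η > 0, ∀ᶠ n in l, W n ⊆ Metric.thickening η F := by
  obtain ⟨F, hF⟩ : ∃ F, Tendsto (fun n => TopologicalSpace.Closeds.closure (W n)) l (𝓝 F) :=
    ⟨_, (l.map fun n => TopologicalSpace.Closeds.closure (W n)).le_nhds_lim⟩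
  have hclose : ∀ η > 0, ∀ᶠ n in l,
      W n ⊆ Metric.thickening η F ∧ (F : Set K) ⊆ Metric.thickening η (W n) := fun η hη => by
    filter_upwards [EMetric.tendsto_nhds.1 hF (ENNReal.ofReal η) (ENNReal.ofReal_pos.2 hη)]
      with n hn
    rw [TopologicalSpace.Closeds.edist_eq, TopologicalSpace.Closeds.coe_closure,
      Metric.hausdorffEDist_closure_left] at hn
    exact ⟨subset_thickening_of_hausdorffEDist_lt hη hn,
      subset_thickening_of_hausdorffEDist_lt hη (Metric.hausdorffEDist_comm.trans_lt hn)⟩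
  refine ⟨F, Metric.tendsto_nhds.2 fun ε hε => ?_, fun η hη => (hclose η hη).mono fun n => And.left⟩
  have hdiam : ∀ {s t : Set K}, s ⊆ Metric.thickening (ε / 3) t →
      Metric.diam s ≤ Metric.diam t + 2 * (ε / 3) := fun hst =>
    (Metric.diam_mono hst Metric.isBounded_of_compactSpace).trans
      (Metric.diam_thickening_le _ (by positivity))
  filter_upwards [hclose (ε / 3) (by positivity)] with n hn
  rw [Real.dist_eq, abs_lt]
  constructor <;> linarith [hdiam hn.1, hdiam hn.2]

lemma gaugeMeasure_iInter_diff_le {H : ℝ → ℝ} {α : Type*} {l : Filter α} [l.NeBot] {N : ℕ → ℕ}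
    {W : α → (Σ j, Fin (N j)) → Set K} {O : (Σ j, Fin (N j)) → Set K} {D : ℝ} (hD : 0 ≤ D)
    {c : ℝ≥0∞} (hdiam : ∀ n t, Metric.diam (W n t) ≤ D / 2 ^ t.1)
    (hc : ∀ n, ∑' t, ENNReal.ofReal (H (Metric.diam (W n t))) ≤ c)
    (hO : ∀ t, ∀ᶠ n in l, W n t ⊆ O t) :
    gaugeMeasure H ((⋂ n, ⋃ t, W n t) \ ⋃ t, O t) ≤ c := by
  refine gaugeMeasure_le_of_forall_exists_cover fun δ hδ => ?_
  have hlim : Tendsto (fun j : ℕ => D / 2 ^ j) atTop (𝓝 0) :=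
    tendsto_const_nhds.div_atTop (tendsto_pow_atTop_atTop_of_one_lt one_lt_two)
  obtain ⟨J, hJ⟩ := (hlim.eventually_le_const hδ).exists
  obtain ⟨n, hn⟩ := ((Filter.eventually_all_finset
    ((Finset.range J).sigma fun j => (Finset.univ : Finset (Fin (N j))))).2 fun t _ => hO t).exists
  refine ⟨range fun t : {t : Σ j, Fin (N j) // J ≤ t.1} => W n t, countable_range _, ?_, ?_, ?_⟩
  · rintro x ⟨hxW, hxO⟩
    obtain ⟨t, ht⟩ := mem_iUnion.1 (mem_iInter.1 hxW n)
    refine ⟨W n t, ⟨⟨t, not_lt.1 fun htJ => hxO (mem_iUnion.2 ⟨t, hn t ?_ ht⟩)⟩, rfl⟩, ht⟩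
    simpa using htJ
  · rintro _ ⟨⟨t, ht⟩, rfl⟩
    refine (hdiam n t).trans (le_trans ?_ hJ)
    gcongr
    norm_num
  · exact (tsum_range_le_tsum (fun s => ENNReal.ofReal (H (Metric.diam s))) _).trans <|
      (ENNReal.tsum_comp_le_tsum_of_injective Subtype.val_injective
        fun t => ENNReal.ofReal (H (Metric.diam (W n t)))).trans (hc n)

lemma essContent_le_tsum_of_eventually_subset_thickening {H G : ℝ → ℝ} (hG : Continuous G)
    {α : Type*} [Countable α] {l : Filter α} [l.NeBot] {N : ℕ → ℕ}
    {W : α → (Σ j, Fin (N j)) → Set K} {D : ℝ} (hD : 0 ≤ D)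
    (hdiam : ∀ n t, Metric.diam (W n t) ≤ D / 2 ^ t.1) {C : ℝ≥0∞} (hC : C < ⊤)
    (hcost : ∀ n, ∑' t, ENNReal.ofReal (H (Metric.diam (W n t))) ≤ C)
    (hcover : ∀ n, HasSigmaFiniteCover (gaugeMeasure H) (⋃ t, W n t)ᶜ)
    {F : (Σ j, Fin (N j)) → Set K}
    (hF : ∀ t, ∀ η > 0, ∀ᶠ n in l, W n t ⊆ Metric.thickening η (F t)) :
    essContent K H G ≤ ∑' t, ENNReal.ofReal (G (Metric.diam (F t))) := by
  by_contra! hlt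
  obtain ⟨η, hη, hηlt⟩ := exists_thickening_tsum_lt hG
    (fun _ => Metric.isBounded_of_compactSpace) hlt
  have hinter : HasSigmaFiniteCover (gaugeMeasure H)
      ((⋂ n, ⋃ t, W n t) \ ⋃ t, Metric.thickening (η t) (F t)) :=
    .of_lt_top ((gaugeMeasure_iInter_diff_le hD hdiam hcost fun t => hF t _ (hη t)).trans_lt hC)
  refine hηlt.not_ge (essContent_le_tsum
    (((HasSigmaFiniteCover.iUnion hcover).union hinter).mono fun x hx => ?_))
  by_cases hxW : x ∈ ⋂ n, ⋃ t, W n t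
  · exact .inr ⟨hxW, hx⟩
  · exact .inl (by rwa [← compl_iInter])

end Limits

theorem exists_lt_essContent_mul_cutoff {K : Type*} [MetricSpace K] [CompactSpace K]
    {H G : ℝ → ℝ} (hH : IsRealGauge H) (hG : Continuous G) (G0 : G 0 = 0) {θ : ℝ} (hθ : 0 < θ)
    (hHG : ∀ t, 0 ≤ t → θ * H t ≤ G t) {c : ℝ≥0∞} (hc : c < essContent K H G) {ρ : ℝ}
    (hρ : 0 < ρ) :
    ∃ δ, 0 < δ ∧ δ ≤ ρ ∧ c < essContent K H fun t => G t * cutoff δ t := by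
  by_contra! hbad
  obtain ⟨b, hcb, hbG⟩ := exists_between hc
  let δ : ℕ → ℝ := fun n => ρ * (1 / (n + 1))
  have hδ0 : ∀ n, 0 < δ n := fun n => mul_pos hρ Nat.one_div_pos_of_nat
  have hδρ : ∀ n, δ n ≤ ρ := fun n => mul_le_of_le_one_right hρ.le
    (div_le_self zero_le_one (by simp))
  have hlim : Tendsto δ atTop (𝓝 0) := by
    simpa only [mul_zero] using tendsto_one_div_add_atTop_nhds_zero_nat.const_mul ρ
  have hδ : Tendsto δ (hyperfilter ℕ) (𝓝[>] 0) :=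
    tendsto_nhdsWithin_iff.2 ⟨hlim.mono_left Nat.hyperfilter_le_atTop, .of_forall hδ0⟩
  choose 𝒰 _ hpos hcover hsum using fun n => exists_cover_of_essContent_lt hH.zero
    ((hbad (δ n) (hδ0 n) (hδρ n)).trans_lt hcb)
  obtain ⟨N, hN⟩ := exists_dyadic_reindexing (K := K) hH
    (C := ENNReal.ofReal (2 / θ) * b) (ENNReal.mul_ne_top ENNReal.ofReal_ne_top hbG.ne_top)
  have hcost : ∀ n, ∑' U : 𝒰 n, ENNReal.ofReal (H (Metric.diam U.1)) ≤
      ENNReal.ofReal (2 / θ) * b := fun n => by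
    refine le_trans ?_ (mul_le_mul_right (hsum n).le _)
    rw [← ENNReal.tsum_mul_left]
    exact ENNReal.tsum_le_tsum fun U =>
      ofReal_le_mul_cutoff hθ (hH.diam_nonneg _) (hHG _ Metric.diam_nonneg) (δ n)
  choose W hWdiam hWunion hWsum using fun n => hN (𝒰 n) (hpos n) (hcost n)
  choose F hFdiam hF using fun t =>
    exists_tendsto_diam_of_ultrafilter (hyperfilter ℕ) fun n => W n t
  refine hbG.not_ge (le_trans (essContent_le_tsum_of_eventually_subset_thickening hG
    Metric.diam_nonneg hWdiam (ENNReal.mul_lt_top ENNReal.ofReal_lt_top hbG.lt_top)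
    (fun n => (hWsum n H hH.zero).trans_le (hcost n)) (fun n => (hWunion n).symm ▸ hcover n) hF) ?_)
  refine tsum_le_of_tendsto (l := (hyperfilter ℕ : Filter ℕ)) (fun t => ENNReal.tendsto_ofReal
    (tendsto_mul_cutoff hG G0 hδ (hFdiam t) Metric.diam_nonneg)) fun n => ?_
  rw [hWsum n (fun s => G s * cutoff (δ n) s) (by simp only [G0, zero_mul])]
  exact (hsum n).le

/-! ### Vanishing gauge factors -/

/-- `φ` is an `n`-fold halving of the constant gauge factor `1`: it equals `(1 / 2) ^ n` on
`(-∞, ρ]`, while `H * φ` keeps the doubling behaviour of the gauge `H`. -/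
structure IsGaugeFactor (n : ℕ) (φ : ℝ → ℝ) (ρ : ℝ) : Prop where
  pos : 0 < ρ
  continuous : Continuous φ
  mono : Monotone φ
  le_one : ∀ t, φ t ≤ 1
  tripling : ∀ t, 0 ≤ t → φ (3 * t) ≤ 2 * φ t
  eq_half_pow : ∀ t ≤ ρ, φ t = (1 / 2) ^ n

namespace IsGaugeFactor

variable {n : ℕ} {φ : ℝ → ℝ} {ρ : ℝ}

lemma one : IsGaugeFactor 0 (fun _ => 1) 1 where
  pos := one_pos
  continuous := continuous_const
  mono := monotone_const
  le_one _ := le_rfl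
  tripling _ _ := by norm_num
  eq_half_pow _ _ := (pow_zero _).symm

lemma half_pow_le (h : IsGaugeFactor n φ ρ) (t : ℝ) : (1 / 2) ^ n ≤ φ t :=
  (h.eq_half_pow _ (min_le_right t ρ)).symm.trans_le (h.mono (min_le_left t ρ))

lemma nonneg (h : IsGaugeFactor n φ ρ) (t : ℝ) : 0 ≤ φ t :=
  (by positivity : (0 : ℝ) ≤ (1 / 2) ^ n).trans (h.half_pow_le t)

-- The cutoff varies only on `[δ, 2 * δ]`, where `φ` is still constant at scale `3`, so the two
-- losses by a factor `2` never accumulate.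
lemma mul_cutoff (h : IsGaugeFactor n φ ρ) {δ : ℝ} (hδ : 0 < δ) (hδρ : δ ≤ ρ / 6) :
    IsGaugeFactor (n + 1) (fun t => φ t * cutoff δ t) δ where
  pos := hδ
  continuous := h.continuous.mul (continuous_cutoff δ)
  mono := h.mono.mul (monotone_cutoff hδ) h.nonneg (cutoff_nonneg δ)
  le_one t := mul_le_one₀ (h.le_one t) (cutoff_nonneg δ t) (cutoff_le_one δ t)
  tripling t ht := by
    rcases le_or_gt (3 * t) ρ with hle | hlt
    · rw [h.eq_half_pow _ hle, h.eq_half_pow t (by linarith), mul_left_comm]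
      gcongr
      linarith [cutoff_le_one δ (3 * t), half_le_cutoff δ t]
    · rw [cutoff_eq_one hδ (by linarith : 2 * δ ≤ 3 * t), cutoff_eq_one hδ (by linarith), mul_one,
        mul_one]
      exact h.tripling t ht
  eq_half_pow t ht := by
    rw [h.eq_half_pow t (by linarith [h.pos]), cutoff_eq_half hδ ht, pow_succ]

end IsGaugeFactor

/-- A sequence of gauge factors in which each step halves the previous factor at scales below
`ρ (n + 1)`. -/
structure IsGaugeFactorSeq (φ : ℕ → ℝ → ℝ) (ρ : ℕ → ℝ) : Prop where
  factor : ∀ n, IsGaugeFactor n (φ n) (ρ n)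
  succ : ∀ n t, φ (n + 1) t = φ n t * cutoff (ρ (n + 1)) t
  ratio : ∀ n, ρ (n + 1) ≤ ρ n / 6

/-- A factor `φ` such that `H * φ` is of smaller order than `H` at `0`, but is still controlled
under enlargement of sets. -/
structure IsVanishingFactor (φ : ℝ → ℝ) : Prop where
  mono : Monotone φ
  nonneg : ∀ t, 0 ≤ φ t
  le_one : ∀ t, φ t ≤ 1
  tripling : ∀ t, 0 ≤ t → φ (3 * t) ≤ 2 * φ t
  small : ∀ ε > 0, ∃ δ > 0, ∀ t < δ, φ t ≤ ε

namespace IsGaugeFactorSeq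

variable {φ : ℕ → ℝ → ℝ} {ρ : ℕ → ℝ} {n : ℕ} {t : ℝ}

lemma tendsto_zero (h : IsGaugeFactorSeq φ ρ) : Tendsto ρ atTop (𝓝 0) := by
  have hgeom : ∀ n, ρ n ≤ (1 / 6) ^ n * ρ 0 := fun n =>
    le_geom (by norm_num) n fun k _ => (h.ratio k).trans_eq (by ring)
  refine squeeze_zero (fun n => (h.factor n).pos.le) hgeom ?_
  simpa only [zero_mul] using
    (tendsto_pow_atTop_nhds_zero_of_lt_one (by norm_num) (by norm_num)).mul_const (ρ 0)

lemma antitone_scale (h : IsGaugeFactorSeq φ ρ) : Antitone ρ :=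
  antitone_nat_of_succ_le fun n => by linarith [h.ratio n, (h.factor n).pos]

lemma antitone (h : IsGaugeFactorSeq φ ρ) (t : ℝ) : Antitone fun n => φ n t :=
  antitone_nat_of_succ_le fun n => (h.succ n t).trans_le <|
    mul_le_of_le_one_right ((h.factor n).nonneg t) (cutoff_le_one _ _)

lemma eq_of_le (h : IsGaugeFactorSeq φ ρ) {m : ℕ} (hnm : n ≤ m) (ht : ρ n ≤ t) :
    φ m t = φ n t := by
  induction m, hnm using Nat.le_induction with
  | base => rfl
  | succ m hnm ih =>
    have hm : 2 * ρ (m + 1) ≤ t := by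
      linarith [h.ratio m, (h.factor m).pos, h.antitone_scale hnm]
    rw [h.succ, ih, cutoff_eq_one (h.factor _).pos hm, mul_one]

lemma bddBelow (h : IsGaugeFactorSeq φ ρ) (t : ℝ) : BddBelow (range fun n => φ n t) :=
  ⟨0, forall_mem_range.2 fun n => (h.factor n).nonneg t⟩

lemma iInf_eq (h : IsGaugeFactorSeq φ ρ) (ht : ρ n ≤ t) : ⨅ k, φ k t = φ n t := by
  refine le_antisymm (ciInf_le (h.bddBelow t) n) (le_ciInf fun k => ?_)
  rcases le_total n k with hnk | hkn
  · exact (h.eq_of_le hnk ht).ge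
  · exact h.antitone t hkn

lemma isVanishingFactor_iInf (h : IsGaugeFactorSeq φ ρ) :
    IsVanishingFactor fun t => ⨅ n, φ n t where
  mono _ t hst := ciInf_mono (h.bddBelow _) fun n => (h.factor n).mono hst
  nonneg t := le_ciInf fun n => (h.factor n).nonneg t
  le_one t := (ciInf_le (h.bddBelow t) 0).trans ((h.factor 0).le_one t)
  tripling t ht := by
    rw [Real.mul_iInf_of_nonneg zero_le_two]
    exact ciInf_mono (h.bddBelow _) fun n => (h.factor n).tripling t ht
  small ε hε := by
    obtain ⟨n, hn⟩ := exists_pow_lt_of_lt_one hε one_half_lt_one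
    exact ⟨ρ n, (h.factor n).pos, fun t ht => (ciInf_le (h.bddBelow t) n).trans
      (((h.factor n).eq_half_pow t ht.le).trans_le hn.le)⟩

end IsGaugeFactorSeq

section VanishingFactor

variable {K : Type*} [MetricSpace K] {H : ℝ → ℝ}

lemma le_sum_of_lt_essContent {G : ℝ → ℝ} {c : ℝ} (hG : ∀ t, 0 ≤ t → 0 ≤ G t)
    (hc : ENNReal.ofReal c < essContent K H G) {s : Finset (Set K)} (hs : ⋃ U ∈ s, U = univ) :
    c ≤ ∑ U ∈ s, G (Metric.diam U) := by
  have hG0 : ∀ U ∈ s, 0 ≤ G (Metric.diam U) := fun U _ => hG _ Metric.diam_nonneg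
  refine (ENNReal.ofReal_le_ofReal_iff (Finset.sum_nonneg hG0)).1 (hc.le.trans ?_)
  have hcover : (⋃ U : s, U.1)ᶜ = ∅ := by rw [iUnion_subtype, hs, compl_univ]
  rw [ENNReal.ofReal_sum_of_nonneg hG0, ← Finset.tsum_subtype]
  refine essContent_le_tsum (hcover ▸ .of_lt_top ?_)
  rw [measure_empty]
  exact ENNReal.zero_lt_top

variable [CompactSpace K]

lemma exists_isGaugeFactorSeq (hH : IsRealGauge H) {c : ℝ≥0∞} (hc : c < essContent K H H) :
    ∃ φ ρ, IsGaugeFactorSeq φ ρ ∧ ∀ n, c < essContent K H fun t => H t * φ n t := by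
  let P : ℕ → (ℝ → ℝ) × ℝ → Prop := fun n s =>
    IsGaugeFactor n s.1 s.2 ∧ c < essContent K H fun t => H t * s.1 t
  have hstep : ∀ n (s : {s // P n s}), ∃ δ ≤ s.1.2 / 6,
      P (n + 1) (fun t => s.1.1 t * cutoff δ t, δ) := by
    rintro n ⟨⟨φ, ρ⟩, hφ, hlt⟩
    obtain ⟨δ, hδ, hδρ, hδlt⟩ := exists_lt_essContent_mul_cutoff hH (G := fun t => H t * φ t)
      (hH.continuous.mul hφ.continuous) (by rw [hH.zero, zero_mul]) (θ := (1 / 2) ^ n)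
      (by positivity)
      (fun t ht => mul_comm (H t) _ ▸ mul_le_mul_of_nonneg_left (hφ.half_pow_le t) (hH.nonneg ht))
      hlt (div_pos hφ.pos (by norm_num : (0 : ℝ) < 6))
    exact ⟨δ, hδρ, hφ.mul_cutoff hδ hδρ, by simpa only [mul_assoc] using hδlt⟩
  choose δ hδ hP using hstep
  let s : ∀ n, {s // P n s} := fun n =>
    Nat.rec ⟨(fun _ => 1, 1), .one, by simpa only [mul_one] using hc⟩
      (fun n s => ⟨(fun t => s.1.1 t * cutoff (δ n s) t, δ n s), hP n s⟩) n
  exact ⟨fun n => (s n).1.1, fun n => (s n).1.2,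
    ⟨fun n => (s n).2.1, fun n t => rfl, fun n => hδ n (s n)⟩, fun n => (s n).2.2⟩

theorem exists_isVanishingFactor (hH : IsRealGauge H)
    (hK : ¬HasSigmaFiniteCover (gaugeMeasure H) (univ : Set K)) :
    ∃ φ, IsVanishingFactor φ ∧ ∃ c > 0, ∀ s : Finset (Set K), ⋃ U ∈ s, U = univ →
      c ≤ ∑ U ∈ s, H (Metric.diam U) * φ (Metric.diam U) := by
  obtain ⟨c, hc, hcK⟩ := ENNReal.lt_iff_exists_nnreal_btwn.1 (essContent_self_pos hH hK)
  rw [← ENNReal.ofReal_coe_nnreal] at hc hcK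
  obtain ⟨φ, ρ, h, hlt⟩ := exists_isGaugeFactorSeq hH hcK
  refine ⟨_, h.isVanishingFactor_iInf, c, ENNReal.ofReal_pos.1 hc, fun s hs => ?_⟩
  have hlimit : ∀ U : Set K, ∀ᶠ n in atTop, H (Metric.diam U) * φ n (Metric.diam U) =
      H (Metric.diam U) * ⨅ k, φ k (Metric.diam U) := fun U => by
    rcases (Metric.diam_nonneg (s := U)).eq_or_lt with hU | hU
    · exact .of_forall fun n => by rw [← hU, hH.zero, zero_mul, zero_mul]
    · filter_upwards [h.tendsto_zero.eventually_le_const hU] with n hn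
      rw [h.iInf_eq hn]
  obtain ⟨n, hn⟩ := ((Filter.eventually_all_finset s).2 fun U _ => hlimit U).exists
  rw [← Finset.sum_congr rfl hn]
  exact le_sum_of_lt_essContent
    (fun t ht => mul_nonneg (hH.nonneg ht) ((h.factor n).nonneg t)) (hlt n) hs

end VanishingFactor

/-! ### Enlargement covers -/

/-- The closed enlargement of `U` by its own diameter can be covered by sets of comparable diameter
at a total `H`-cost of at most `C` times that of `U`. -/
def HasEnlargementCover {K : Type*} [MetricSpace K] (H : ℝ → ℝ) (C : ℝ) (U : Set K) : Prop :=
  ∃ 𝒱 : Finset (Set K), Metric.cthickening (Metric.diam U) U ⊆ ⋃ V ∈ 𝒱, V ∧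
    (∀ V ∈ 𝒱, Metric.diam V ≤ 3 * Metric.diam U) ∧
    ∑ V ∈ 𝒱, H (Metric.diam V) ≤ C * H (Metric.diam U)

section Enlargement

variable {K : Type*} [MetricSpace K] {H : ℝ → ℝ} {C δ : ℝ}

lemma diam_cthickening_diam_le (U : Set K) :
    Metric.diam (Metric.cthickening (Metric.diam U) U) ≤ 3 * Metric.diam U :=
  (Metric.diam_cthickening_le U Metric.diam_nonneg).trans_eq (by ring)

lemma HasEnlargementCover.of_le {U : Set K}
    (hU : H (Metric.diam (Metric.cthickening (Metric.diam U) U)) ≤ C * H (Metric.diam U)) :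
    HasEnlargementCover H C U :=
  ⟨{Metric.cthickening (Metric.diam U) U}, by simp,
    by simpa using diam_cthickening_diam_le U, by simpa using hU⟩

lemma diam_cthickening_diam_le_of_isUltrametricDist [CompactSpace K] [IsUltrametricDist K]
    (U : Set K) : Metric.diam (Metric.cthickening (Metric.diam U) U) ≤ Metric.diam U := by
  refine Metric.diam_le_of_forall_dist_le Metric.diam_nonneg fun x hx y hy => ?_
  rw [Metric.cthickening_eq_biUnion_closedBall U Metric.diam_nonneg] at hx hy
  obtain ⟨z, hz, hxz⟩ := mem_iUnion₂.1 hx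
  obtain ⟨w, hw, hyw⟩ := mem_iUnion₂.1 hy
  have hzw : dist z w ≤ Metric.diam U := Metric.diam_closure U ▸
    Metric.dist_le_diam_of_mem Metric.isBounded_of_compactSpace hz hw
  calc dist x y ≤ max (dist x z) (dist z y) := dist_triangle_max x z y
    _ ≤ max (dist x z) (max (dist z w) (dist w y)) := by gcongr; exact dist_triangle_max z w y
    _ ≤ Metric.diam U := max_le hxz (max_le hzw (Metric.mem_closedBall'.1 hyw))

lemma HasEnlargementCover.of_card_le [CompactSpace K] (hH : IsRealGauge H) {U : Set K}
    {𝒱 : Finset (Set K)} (hcov : Metric.cthickening (Metric.diam U) U ⊆ ⋃ V ∈ 𝒱, V)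
    (hdiam : ∀ V ∈ 𝒱, Metric.diam V ≤ Metric.diam U) (hcard : 𝒱.card ≤ C) :
    HasEnlargementCover H C U := by
  refine ⟨𝒱, hcov, fun V hV => (hdiam V hV).trans (by linarith [Metric.diam_nonneg (s := U)]), ?_⟩
  calc ∑ V ∈ 𝒱, H (Metric.diam V) ≤ 𝒱.card • H (Metric.diam U) :=
        Finset.sum_le_card_nsmul _ _ _ fun V hV => hH.mono (hdiam V hV)
    _ ≤ C * H (Metric.diam U) := by
        rw [nsmul_eq_mul]
        exact mul_le_mul_of_nonneg_right hcard (hH.diam_nonneg U)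

lemma HasEnlargementCover.mono (hH : IsRealGauge H) {U : Set K} {C' : ℝ}
    (hU : HasEnlargementCover H C U) (hC : C ≤ C') : HasEnlargementCover H C' U :=
  let ⟨𝒱, hcov, hdiam, hsum⟩ := hU
  ⟨𝒱, hcov, hdiam, hsum.trans (mul_le_mul_of_nonneg_right hC (hH.diam_nonneg U))⟩

lemma FiniteStructuralDim.exists_hasEnlargementCover [CompactSpace K] (hK : FiniteStructuralDim K)
    (hH : IsRealGauge H) :
    ∃ C, ∃ δ > 0, ∀ U : Set K, Metric.diam U ≤ δ → HasEnlargementCover H C U := by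
  classical
  obtain ⟨N, δ, hδ, hN⟩ := hK (1 / 3) (by norm_num)
  refine ⟨N, δ / 3, by positivity, fun U hU => ?_⟩
  set E := Metric.cthickening (Metric.diam U) U
  have hE : Metric.ediam E ≤ ENNReal.ofReal (3 * Metric.diam U) := by
    rw [← ENNReal.ofReal_toReal (Metric.isBounded_of_compactSpace (s := E)).ediam_ne_top]
    exact ENNReal.ofReal_le_ofReal (diam_cthickening_diam_le U)
  obtain ⟨V, hEV, hV⟩ := hN E (hE.trans (ENNReal.ofReal_le_of_le_toReal
    ((le_div_iff₀' three_pos).1 hU)))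
  have hdiam : ∀ i, Metric.diam (V i) ≤ Metric.diam U := fun i => by
    refine ENNReal.toReal_le_of_le_ofReal Metric.diam_nonneg ((hV i).trans ?_)
    refine (mul_le_mul_right hE _).trans_eq ?_
    rw [← ENNReal.ofReal_coe_nnreal, ← ENNReal.ofReal_mul (by positivity)]
    congr 1
    push_cast
    ring
  refine .of_card_le hH (𝒱 := Finset.univ.image V) (by simpa using hEV) (by simpa using hdiam)
    (Nat.cast_le.2 (Finset.card_image_le.trans_eq (by simp)))

lemma HasEnlargementCover.of_tripling (hH : IsRealGauge H) {U : Set K}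
    (hU : H (3 * Metric.diam U) ≤ C * H (Metric.diam U)) : HasEnlargementCover H C U :=
  .of_le ((hH.mono (diam_cthickening_diam_le U)).trans hU)

lemma hasEnlargementCover_one_of_isUltrametricDist [CompactSpace K] [IsUltrametricDist K]
    (hH : IsRealGauge H) (U : Set K) : HasEnlargementCover H 1 U :=
  .of_le ((hH.mono (diam_cthickening_diam_le_of_isUltrametricDist U)).trans_eq (one_mul _).symm)

lemma exists_forall_hasEnlargementCover [CompactSpace K] (hH : IsRealGauge H) (hδ : 0 < δ)
    (hloc : ∀ U : Set K, Metric.diam U ≤ δ → HasEnlargementCover H C U) :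
    ∃ C > 0, ∀ U : Set K, HasEnlargementCover H C U := by
  classical
  obtain ⟨t, -, ht, hcov⟩ := (isCompact_univ (X := K)).finite_cover_balls (half_pos hδ)
  set 𝒱 := ht.toFinset.image fun x => Metric.ball x (δ / 2)
  refine ⟨max C 𝒱.card + 1, by positivity, fun U => ?_⟩
  rcases le_total (Metric.diam U) δ with hU | hU
  · exact (hloc U hU).mono hH (by linarith [le_max_left C 𝒱.card])
  · refine .of_card_le hH (𝒱 := 𝒱) (fun x _ => ?_) ?_ (by linarith [le_max_right C 𝒱.card])
    · simpa [𝒱] using hcov (mem_univ x)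
    · simp only [𝒱, Finset.mem_image, forall_exists_index, and_imp, forall_apply_eq_imp_iff₂]
      exact fun x _ => (Metric.diam_ball (by positivity)).trans (by linarith)

theorem disjointSubcoverBound_of_enlargement [CompactSpace K] {g : Set K → ℝ}
    (g0 : ∀ U, 0 ≤ g U) {c : ℝ}
    (hg : ∀ U, ∃ 𝒱 : Finset (Set K), Metric.cthickening (Metric.diam U) U ⊆ ⋃ V ∈ 𝒱, V ∧
      ∑ V ∈ 𝒱, g V ≤ C * g U)
    (hc : ∀ s : Finset (Set K), ⋃ U ∈ s, U = univ → c ≤ ∑ U ∈ s, g U) :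
    DisjointSubcoverBound g C c := by
  classical
  choose 𝒱 hcov hsum using hg
  intro s hs
  obtain ⟨B, hBs, hdisj, hB⟩ :=
    exists_disjoint_subfamily_meeting Metric.diam (fun _ => Metric.diam_nonneg) s
  refine ⟨B, hBs, hdisj, ?_⟩
  have hcover : ⋃ W ∈ (B.sigma 𝒱).image Sigma.snd, W = univ := eq_univ_of_forall fun x => by
    obtain ⟨U, hU, hx⟩ := mem_iUnion₂.1 (hs ▸ mem_univ x : x ∈ ⋃ U ∈ s, U)
    obtain ⟨V, hV, ⟨z, hzU, hzV⟩, hUV⟩ := hB U hU ⟨x, hx⟩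
    have hxV : x ∈ Metric.cthickening (Metric.diam V) V :=
      Metric.mem_cthickening_of_dist_le x z _ V hzV
        ((Metric.dist_le_diam_of_mem Metric.isBounded_of_compactSpace hx hzU).trans hUV)
    obtain ⟨W, hW, hxW⟩ := mem_iUnion₂.1 (hcov V hxV)
    exact mem_iUnion₂.2
      ⟨W, Finset.mem_image.2 ⟨⟨V, W⟩, Finset.mem_sigma.2 ⟨hV, hW⟩, rfl⟩, hxW⟩
  calc c ≤ ∑ W ∈ (B.sigma 𝒱).image Sigma.snd, g W := hc _ hcover
    _ ≤ ∑ p ∈ B.sigma 𝒱, g p.2 := Finset.sum_image_le_of_nonneg fun _ _ => g0 _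
    _ = ∑ V ∈ B, ∑ W ∈ 𝒱 V, g W := Finset.sum_sigma _ _ _
    _ ≤ ∑ V ∈ B, C * g V := Finset.sum_le_sum fun V _ => hsum V
    _ = C * ∑ V ∈ B, g V := (Finset.mul_sum _ _ _).symm

lemma IsVanishingFactor.exists_cover_weighted_sum_le {φ : ℝ → ℝ} (hφ : IsVanishingFactor φ)
    (hH : IsRealGauge H) {U : Set K} (hU : HasEnlargementCover H C U) :
    ∃ 𝒱 : Finset (Set K), Metric.cthickening (Metric.diam U) U ⊆ ⋃ V ∈ 𝒱, V ∧
      ∑ V ∈ 𝒱, H (Metric.diam V) * φ (Metric.diam V) ≤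
        2 * C * (H (Metric.diam U) * φ (Metric.diam U)) := by
  obtain ⟨𝒱, hcov, hdiam, hsum⟩ := hU
  refine ⟨𝒱, hcov, ?_⟩
  have hφV : ∀ V ∈ 𝒱, φ (Metric.diam V) ≤ 2 * φ (Metric.diam U) := fun V hV =>
    (hφ.mono (hdiam V hV)).trans (hφ.tripling _ Metric.diam_nonneg)
  calc ∑ V ∈ 𝒱, H (Metric.diam V) * φ (Metric.diam V)
      ≤ ∑ V ∈ 𝒱, H (Metric.diam V) * (2 * φ (Metric.diam U)) :=
        Finset.sum_le_sum fun V hV => mul_le_mul_of_nonneg_left (hφV V hV) (hH.diam_nonneg V)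
    _ = (∑ V ∈ 𝒱, H (Metric.diam V)) * (2 * φ (Metric.diam U)) := (Finset.sum_mul _ _ _).symm
    _ ≤ C * H (Metric.diam U) * (2 * φ (Metric.diam U)) :=
        mul_le_mul_of_nonneg_right hsum (mul_nonneg zero_le_two (hφ.nonneg _))
    _ = 2 * C * (H (Metric.diam U) * φ (Metric.diam U)) := by ring

lemma IsVanishingFactor.isFrostmanMeasure {φ : ℝ → ℝ} (hφ : IsVanishingFactor φ)
    (hH : IsRealGauge H) [MeasurableSpace K] {ν : Measure K}
    (hν : ∀ U, IsOpen U → ν U ≤ ENNReal.ofReal (H (Metric.diam U) * φ (Metric.diam U))) :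
    IsFrostmanMeasure H ν where
  le U hU := (hν U hU).trans <| ENNReal.ofReal_le_ofReal <|
    mul_le_of_le_one_right (hH.diam_nonneg U) (hφ.le_one _)
  small ε hε := by
    obtain ⟨δ, hδ, hsmall⟩ := hφ.small ε hε
    refine ⟨δ, hδ, fun U hU hUδ => (hν U hU).trans (ENNReal.ofReal_le_ofReal ?_)⟩
    rw [mul_comm]
    exact mul_le_mul_of_nonneg_right (hsmall _ hUδ) (hH.diam_nonneg U)

theorem exists_disjoint_compact_family_of_hasEnlargementCover [CompactSpace K]
    (hH : IsRealGauge H) (hC : 0 < C) (hcov : ∀ U : Set K, HasEnlargementCover H C U)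
    (hK : ¬HasSigmaFiniteCover (gaugeMeasure H) (univ : Set K)) :
    ∃ T : (ℕ → Bool) → Set K, (∀ x, IsCompact (T x)) ∧ Pairwise (Function.onFun Disjoint T) ∧
      ∀ x, 0 < gaugeMeasure H (T x) := by
  borelize K
  obtain ⟨φ, hφ, c, hc, hcK⟩ := exists_isVanishingFactor hH hK
  have g0 : ∀ U : Set K, 0 ≤ H (Metric.diam U) * φ (Metric.diam U) := fun U =>
    mul_nonneg (hH.diam_nonneg U) (hφ.nonneg _)
  have hbound : DisjointSubcoverBound
      (fun U : Set K => H (Metric.diam U) * φ (Metric.diam U)) (2 * C) c :=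
    disjointSubcoverBound_of_enlargement g0
      (fun U => hφ.exists_cover_weighted_sum_le hH (hcov U)) hcK
  obtain ⟨ν, _, hν0, hν⟩ := hbound.exists_measure g0 (by positivity) hc
  exact (hφ.isFrostmanMeasure hH hν).exists_disjoint_compact_family hH hν0

end Enlargement

/-! ### Hausdorff functions -/

section HausdorffMeasureTransfer

variable {K Z : Type*}

lemma hausdorffM_eq_mkMetric [EMetricSpace Z] {h : ℝ≥0 → ℝ≥0∞} {m : ℝ≥0∞ → ℝ≥0∞}
    (hm : (fun d : ℝ≥0∞ => h d.toNNReal) =ᶠ[𝓝 0] m) :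
    (hausdorffM h : OuterMeasure Z) = OuterMeasure.mkMetric m :=
  le_antisymm (OuterMeasure.mkMetric_mono hm.le) (OuterMeasure.mkMetric_mono hm.symm.le)

lemma hausdorffM_congr [EMetricSpace Z] {h h' : ℝ≥0 → ℝ≥0∞} (hh : h =ᶠ[𝓝 0] h') :
    (hausdorffM h : OuterMeasure Z) = hausdorffM h' :=
  hausdorffM_eq_mkMetric ((ENNReal.tendsto_toNNReal ENNReal.zero_ne_top).eventually hh)

lemma hausdorffM_image [EMetricSpace K] [EMetricSpace Z] {h : ℝ≥0 → ℝ≥0∞} (hh : Monotone h)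
    {f : K → Z} (hf : Isometry f) (s : Set K) : hausdorffM h (f '' s) = hausdorffM h s := by
  -- `fun d => h d.toNNReal` is not monotone because `(⊤ : ℝ≥0∞).toNNReal = 0`.
  set m : ℝ≥0∞ → ℝ≥0∞ := fun d => h (min d 1).toNNReal
  have hm : Monotone m := fun a b hab => hh <|
    ENNReal.toNNReal_mono (min_lt_of_right_lt ENNReal.one_lt_top).ne (min_le_min_right 1 hab)
  have heq : (fun d : ℝ≥0∞ => h d.toNNReal) =ᶠ[𝓝 0] m := by
    filter_upwards [gt_mem_nhds (one_pos : (0 : ℝ≥0∞) < 1)] with d hd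
    simp only [m, min_eq_left hd.le]
  rw [hausdorffM_eq_mkMetric heq, hausdorffM_eq_mkMetric heq,
    ← OuterMeasure.isometry_comap_mkMetric m hf (Or.inl hm), OuterMeasure.comap_apply]

lemma HasSigmaFiniteCover.image [EMetricSpace K] [EMetricSpace Z] {h : ℝ≥0 → ℝ≥0∞}
    (hh : Monotone h) {f : K → Z} (hf : Isometry f) {s : Set K}
    (hs : HasSigmaFiniteCover (hausdorffM h) s) : HasSigmaFiniteCover (hausdorffM h) (f '' s) := by
  obtain ⟨𝒜, h𝒜, hfin, hs𝒜⟩ := hs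
  refine ⟨Set.image f '' 𝒜, h𝒜.image _, ?_, ?_⟩
  · rintro _ ⟨A, hA, rfl⟩
    exact (hausdorffM_image hh hf A).trans_lt (hfin A hA)
  · rw [← image_sUnion]
    exact image_mono hs𝒜

lemma HasSigmaFiniteCover.sigmaFiniteSet [EMetricSpace Z] {h : ℝ≥0 → ℝ≥0∞} {Y : Set Z}
    (hY : IsClosed Y) (hcov : HasSigmaFiniteCover (hausdorffM h) Y) :
    SigmaFiniteSet (hausdorffM h) Y := by
  borelize Z
  obtain ⟨𝒜, h𝒜, hfin, hY𝒜⟩ := hcov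
  obtain ⟨A, hA⟩ := (h𝒜.insert ∅).exists_eq_range (insert_nonempty _ _)
  set ν : Measure Z := Measure.mkMetric fun d => h d.toNNReal
  have hν : ∀ s, ν s = hausdorffM h s := fun s => by
    rw [hausdorffM, ← Measure.mkMetric_toOuterMeasure, Measure.toOuterMeasure_apply]
  have hAfin : ∀ n, hausdorffM h (A n) < ⊤ := fun n => by
    rcases (hA ▸ mem_range_self n : A n ∈ insert ∅ 𝒜) with hn | hn
    · simp [hn]
    · exact hfin _ hn
  refine ⟨fun n => toMeasurable ν (A n) ∩ Y, fun n => ⟨?_, ?_⟩, ?_⟩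
  · exact borel_le_caratheodory_hausdorffM _
      ((measurableSet_toMeasurable ν _).inter hY.measurableSet)
  · calc hausdorffM h (toMeasurable ν (A n) ∩ Y) ≤ ν (toMeasurable ν (A n)) :=
          (measure_mono inter_subset_left).trans_eq (hν _).symm
      _ = hausdorffM h (A n) := (measure_toMeasurable _).trans (hν _)
      _ < ⊤ := hAfin n
  · rw [← iUnion_inter, eq_comm, inter_eq_right]
    intro y hy
    obtain ⟨B, hB, hyB⟩ := hY𝒜 hy
    obtain ⟨n, rfl⟩ := (hA ▸ mem_insert_of_mem _ hB : B ∈ range A)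
    exact mem_iUnion.2 ⟨n, subset_toMeasurable ν _ hyB⟩

lemma FiniteStructuralDim.of_isometry [EMetricSpace K] [EMetricSpace Z]
    (hZ : FiniteStructuralDim Z) {f : K → Z} (hf : Isometry f) : FiniteStructuralDim K := by
  intro ξ hξ
  obtain ⟨N, δ, hδ, hN⟩ := hZ ξ hξ
  refine ⟨N, δ, hδ, fun s hs => ?_⟩
  obtain ⟨U, hsU, hU⟩ := hN (f '' s) ((hf.ediam_image s).trans_le hs)
  refine ⟨fun i => f ⁻¹' U i, ?_, fun i => ?_⟩
  · rwa [← preimage_iUnion, ← image_subset_iff]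
  · calc Metric.ediam (f ⁻¹' U i) = Metric.ediam (f '' (f ⁻¹' U i)) := (hf.ediam_image _).symm
      _ ≤ Metric.ediam (U i) := Metric.ediam_mono (image_preimage_subset f _)
      _ ≤ ξ * Metric.ediam (f '' s) := hU i
      _ = ξ * Metric.ediam s := by rw [hf.ediam_image]

end HausdorffMeasureTransfer

/-- The Hausdorff function `h` truncated at height `1`, as a real function of a real variable. Since
only the values of `h` near `0` matter for `hausdorffM h`, nothing is lost. -/
noncomputable def truncatedGauge (h : ℝ≥0 → ℝ≥0∞) (t : ℝ) : ℝ := (min (h t.toNNReal) 1).toReal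

section TruncatedGauge

variable {h : ℝ≥0 → ℝ≥0∞}

lemma min_one_ne_top (a : ℝ≥0∞) : min a 1 ≠ ⊤ := (min_lt_of_right_lt ENNReal.one_lt_top).ne

lemma IsHausdorffFunction.isRealGauge_truncatedGauge (hh : IsHausdorffFunction h)
    (hcont : Continuous h) (h0 : h 0 = 0) : IsRealGauge (truncatedGauge h) where
  continuous := ENNReal.continuousOn_toReal.comp_continuous
    ((hcont.comp continuous_real_toNNReal).min continuous_const) fun _ => min_one_ne_top _
  mono _ _ hst := ENNReal.toReal_mono (min_one_ne_top _)
    (min_le_min_right _ (hh.mono (Real.toNNReal_mono hst)))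
  pos _ ht := ENNReal.toReal_pos
    (lt_min (hh.pos _ (Real.toNNReal_pos.2 ht)) one_pos).ne' (min_one_ne_top _)
  zero := by simp [truncatedGauge, h0]

lemma gaugeMeasure_truncatedGauge {K : Type*} [MetricSpace K] (hcont : Continuous h)
    (h0 : h 0 = 0) : (gaugeMeasure (truncatedGauge h) : OuterMeasure K) = hausdorffM h := by
  refine hausdorffM_congr ?_
  filter_upwards [hcont.tendsto' 0 0 h0 |>.eventually (gt_mem_nhds one_pos)] with t ht
  rw [truncatedGauge, ENNReal.ofReal_toReal (min_one_ne_top _), Real.toNNReal_coe,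
    min_eq_left ht.le]

lemma FiniteOrder.exists_tripling (hfo : FiniteOrder h) (hpos : ∀ t, 0 < t → 0 < h t)
    (h0 : h 0 = 0) : ∃ C : ℝ≥0, 1 ≤ C ∧ ∃ δ > 0, ∀ t ≤ δ, h (3 * t) ≤ C * h t := by
  obtain ⟨c, hc, -⟩ := ENNReal.lt_iff_exists_nnreal_btwn.1 hfo
  have hev := eventually_nhdsWithin_iff.1 (eventually_lt_of_limsup_lt hc)
  obtain ⟨δ, hδ, hlt⟩ := (NNReal.nhds_zero_basis.eventually_iff).1 hev
  refine ⟨max c 1, le_max_right c 1, δ / 2, half_pos hδ, fun t ht => ?_⟩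
  rcases eq_zero_or_pos t with rfl | ht0
  · simp [h0]
  · have hC : ((max c 1 : ℝ≥0) : ℝ≥0∞) ≠ 0 := by simp
    refine (ENNReal.div_le_iff_le_mul (.inl (hpos t ht0).ne') (.inr hC)).1 ?_
    exact (hlt (ht.trans_lt (NNReal.half_lt_self hδ.ne')) ht0).le.trans (mod_cast le_max_left c 1)

lemma truncatedGauge_three_mul_le {C : ℝ≥0} (hC : 1 ≤ C) {t : ℝ≥0}
    (ht : h (3 * t) ≤ C * h t) : truncatedGauge h (3 * t) ≤ C * truncatedGauge h t := by
  have hmin : min (h (3 * t)) 1 ≤ C * min (h t) 1 := by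
    rw [mul_min, mul_one]
    exact min_le_min ht (mod_cast hC)
  have h3 : (3 * t : ℝ).toNNReal = 3 * t := by
    rw [Real.toNNReal_mul zero_le_three, Real.toNNReal_coe, Real.toNNReal_ofNat]
  rw [truncatedGauge, truncatedGauge, h3, Real.toNNReal_coe, ← ENNReal.coe_toReal C,
    ← ENNReal.toReal_mul]
  exact ENNReal.toReal_mono (ENNReal.mul_ne_top ENNReal.coe_ne_top (min_one_ne_top _)) hmin

theorem exists_hasEnlargementCover_truncatedGauge {K : Type*} [MetricSpace K] [CompactSpace K]
    (hh : IsHausdorffFunction h) (hcont : Continuous h) (h0 : h 0 = 0)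
    (alt : FiniteOrder h ∨ FiniteStructuralDim K ∨ IsUltrametricDist K) :
    ∃ C > 0, ∀ U : Set K, HasEnlargementCover (truncatedGauge h) C U := by
  have hH := hh.isRealGauge_truncatedGauge hcont h0
  rcases alt with hfo | hfin | hult
  · obtain ⟨C, hC, δ, hδ, htriple⟩ := hfo.exists_tripling hh.pos h0
    exact exists_forall_hasEnlargementCover hH (NNReal.coe_pos.2 hδ) fun U hU =>
      .of_tripling hH (truncatedGauge_three_mul_le (t := ⟨Metric.diam U, Metric.diam_nonneg⟩) hC
        (htriple _ hU))
  · obtain ⟨C, δ, hδ, hloc⟩ := hfin.exists_hasEnlargementCover hH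
    exact exists_forall_hasEnlargementCover hH hδ hloc
  · exact ⟨1, one_pos, hasEnlargementCover_one_of_isUltrametricDist hH⟩

end TruncatedGauge

theorem exists_disjoint_compact_family_hausdorffM_pos {Z : Type*} [MetricSpace Z] {Y : Set Z}
    (hY : IsCompact Y) {h : ℝ≥0 → ℝ≥0∞} (hh : IsHausdorffFunction h) (hcont : Continuous h)
    (h0 : h 0 = 0) (alt : FiniteOrder h ∨ FiniteStructuralDim Y ∨ IsUltrametricDist Y)
    (hYσ : ¬SigmaFiniteSet (hausdorffM h) Y) :
    ∃ T : (ℕ → Bool) → Set Z, (∀ x, IsCompact (T x) ∧ T x ⊆ Y ∧ 0 < hausdorffM h (T x)) ∧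
      Pairwise (Function.onFun Disjoint T) := by
  have : CompactSpace Y := isCompact_iff_compactSpace.1 hY
  have hmeas := gaugeMeasure_truncatedGauge (K := Y) hcont h0
  have hYcov : ¬HasSigmaFiniteCover (gaugeMeasure (truncatedGauge h)) (univ : Set Y) := fun hcov =>
    hYσ <| HasSigmaFiniteCover.sigmaFiniteSet hY.isClosed <| by
      have := (hmeas ▸ hcov).image hh.mono isometry_subtype_coe
      rwa [image_univ, Subtype.range_coe] at this
  obtain ⟨C, hC, hcov⟩ := exists_hasEnlargementCover_truncatedGauge (K := Y) hh hcont h0 alt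
  obtain ⟨T, hT, hdisj, hpos⟩ := exists_disjoint_compact_family_of_hasEnlargementCover
    (hh.isRealGauge_truncatedGauge hcont h0) hC hcov hYcov
  refine ⟨fun x => (↑) '' T x, fun x => ⟨(hT x).image continuous_subtype_val,
    Subtype.coe_image_subset Y _, ?_⟩, fun x y hxy =>
    (disjoint_image_iff Subtype.val_injective).2 (hdisj hxy)⟩
  rw [hausdorffM_image hh.mono isometry_subtype_coe, ← hmeas]
  exact hpos x

/-! ### Null fibres and perfect kernels -/

section PropertyA

lemma countable_setOf_inter_ne_zero {X β : Type*} {μ : OuterMeasure X} {A : Set X}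
    (hA : μ.IsCaratheodory A) (hμA : μ A < ⊤) {S : β → Set X} (hS : ∀ x, μ.IsCaratheodory (S x))
    (hd : Pairwise (Function.onFun Disjoint S)) : {x | μ (S x ∩ A) ≠ 0}.Countable := by
  let _ : MeasurableSpace X := μ.caratheodory
  have hAm : MeasurableSet A := hA
  have hSm : ∀ x, MeasurableSet (S x) := hS
  set ν : Measure X := (μ.toMeasure le_rfl).restrict A
  have hν : ∀ {s}, MeasurableSet s → ν s = μ (s ∩ A) := fun {s} hs => by
    rw [Measure.restrict_apply hs, toMeasure_apply _ _ (hs.inter hAm)]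
  have : IsFiniteMeasure ν := ⟨by rwa [hν MeasurableSet.univ, univ_inter]⟩
  simpa only [hν (hSm _), pos_iff_ne_zero] using
    Measure.countable_meas_pos_of_disjoint_iUnion (μ := ν) hSm hd

lemma PropertyA.exists_null {X : Type u} {β : Type v} {μ : OuterMeasure X} {κ : Cardinal.{u}}
    (hA : PropertyA μ κ) (hβ : Cardinal.aleph0 < Cardinal.mk β)
    (hκ : Cardinal.lift.{v} κ < Cardinal.lift.{u} (Cardinal.mk β)) {S : β → Set X}
    (hS : ∀ x, μ.IsCaratheodory (S x)) (hd : Pairwise (Function.onFun Disjoint S)) :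
    ∃ x, μ (S x) = 0 := by
  obtain ⟨⟨ι, A, rfl, hAuniv, hAfin⟩, hnull⟩ := hA
  by_contra! hpos
  have hcover : ⋃ i, {x | μ (S x ∩ A i) ≠ 0} = univ := eq_univ_of_forall fun x => by
    by_contra hx
    have hzero : ∀ i, μ (S x ∩ A i) = 0 := by simpa using hx
    refine hpos x ?_
    rw [← inter_univ (S x), ← hAuniv, inter_iUnion]
    exact hnull ι _ rfl hzero
  have hcard := Cardinal.mk_iUnion_le_lift fun i => {x | μ (S x ∩ A i) ≠ 0}
  rw [hcover, Cardinal.mk_univ] at hcard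
  refine hcard.not_gt (Cardinal.mul_lt_of_lt (by simpa using hβ.le) hκ ?_)
  refine (ciSup_le' fun i => ?_).trans_lt (by simpa using hβ : Cardinal.aleph0 < _)
  simpa using countable_setOf_inter_ne_zero (hAfin i).1 (hAfin i).2 hS hd

end PropertyA

section PerfectSet

variable {X : Type*} [TopologicalSpace X] [T1Space X]

lemma PerfectSet.of_perfect {D : Set X} (hD : Perfect D) : PerfectSet D := by
  refine ⟨hD.closed, fun O hO ⟨x, hxO, hxD⟩ => ?_⟩
  exact Infinite.of_accPt ((hD.acc x hxD).nhds_inter (hO.mem_nhds hxO))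

lemma exists_perfectSet_of_outerMeasure_ne_zero [SecondCountableTopology X] {ν : OuterMeasure X}
    (hν : ∀ s : Set X, s.Countable → ν s = 0) {C : ℕ → Set X} (hC : ∀ n, IsClosed (C n))
    (hpos : ν (⋃ n, C n) ≠ 0) : ∃ D ⊆ ⋃ n, C n, PerfectSet D ∧ ν D ≠ 0 := by
  obtain ⟨n, hn⟩ : ∃ n, ν (C n) ≠ 0 := by
    contrapose! hpos
    exact measure_iUnion_null hpos
  obtain ⟨V, D, hV, hD, hVD⟩ := exists_countable_union_perfect_of_isClosed (hC n)
  refine ⟨D, (hVD ▸ subset_union_right).trans (subset_iUnion C n), .of_perfect hD,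
    fun hD0 => hn ?_⟩
  rw [hVD]
  exact measure_union_null (hν V hV) hD0

end PerfectSet

theorem statement_6_general {X : Type u} {Z : Type v} [MetricSpace Z]
    (μ : OuterMeasure X) (κ : Cardinal.{u}) (hκ : κ < 2 ^ Cardinal.aleph0) (hA : PropertyA μ κ)
    (Y : Set Z) (h : ℝ≥0 → ℝ≥0∞) (hh : IsHausdorffFunction h) (hcont : Continuous h)
    (h0 : h 0 = 0) (alt : FiniteOrder h ∨ FiniteStructuralDim Y ∨ IsUltrametricDist Y)
    (hYσ : ¬SigmaFiniteSet (hausdorffM h) Y) (hY : IsCompact Y)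
    (f : X → Z) (hrange : Y ⊆ range f)
    (hmeas : ∀ O : Set Z, IsOpen O → μ.IsCaratheodory (f ⁻¹' O)) :
    (∃ N : Set X, μ N = 0 ∧ 0 < hausdorffM h (f '' N)) ∧
    (∀ tX : TopologicalSpace X, @SecondCountableTopology X tX →
      @T1Space X tX →
      (∀ F : Set Z, IsClosed F →
        ∃ C : ℕ → Set X, (∀ n, @IsClosed X tX (C n)) ∧ f ⁻¹' F = ⋃ n, C n) →
      ∃ N : Set X, @PerfectSet X tX N ∧ μ N = 0 ∧ 0 < hausdorffM h (f '' N)) := by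
  obtain ⟨T, hT, hdisj⟩ :=
    exists_disjoint_compact_family_hausdorffM_pos hY hh hcont h0 alt hYσ
  have hTmeas : ∀ x, μ.IsCaratheodory (f ⁻¹' T x) := fun x =>
    (OuterMeasure.isCaratheodory_compl_iff μ).1 (hmeas _ (hT x).1.isClosed.isOpen_compl)
  obtain ⟨x, hx⟩ : ∃ x, μ (f ⁻¹' T x) = 0 :=
    hA.exists_null (by simpa using Cardinal.cantor Cardinal.aleph0) (by simpa using hκ) hTmeas
      fun x y hxy => (hdisj hxy).preimage f
  obtain ⟨hTx, hTY, hTpos⟩ := hT x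
  rw [← image_preimage_eq_of_subset (hTY.trans hrange)] at hTpos
  refine ⟨⟨_, hx, hTpos⟩, fun tX _ _ hF => ?_⟩
  obtain ⟨C, hC, hTC⟩ := hF (T x) hTx.isClosed
  obtain ⟨D, hDC, hD, hDpos⟩ := exists_perfectSet_of_outerMeasure_ne_zero
    (ν := OuterMeasure.comap f (hausdorffM h))
    (fun s hs => hausdorffM_countable h0 (hs.image f)) hC (hTC ▸ hTpos.ne')
  exact ⟨D, hD, measure_mono_null (hDC.trans hTC.ge) hx, pos_iff_ne_zero.2 hDpos⟩

/-- Theorem `Compact target`. -/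
theorem statement_6 {X : Type u} {Z : Type v} [MetricSpace Z]
    (μ : MeasureTheory.OuterMeasure X)
    (κ : Cardinal.{u}) (hκ : κ < 2 ^ Cardinal.aleph0)
    (hA : PropertyA μ κ)
    (Y : Set Z) (h : ℝ≥0 → ℝ≥0∞) (hH : PropertyHInf Y h) (hYcomp : IsCompact Y)
    (f : X → Z) (hrange : Set.range f = Y)
    (hmeas : ∀ O : Set Z, IsOpen O → μ.IsCaratheodory (f ⁻¹' O)) :
    (∃ N : Set X, μ N = 0 ∧ 0 < hausdorffM h (f '' N)) ∧
    (∀ tX : TopologicalSpace X, @SecondCountableTopology X tX →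
      @T1Space X tX →
      (∀ F : Set Z, IsClosed F →
        ∃ C : ℕ → Set X, (∀ n, @IsClosed X tX (C n)) ∧ f ⁻¹' F = ⋃ n, C n) →
      ∃ N : Set X, @PerfectSet X tX N ∧ μ N = 0 ∧ 0 < hausdorffM h (f '' N)) :=
  statement_6_general μ κ hκ hA Y h hH.1.hausdorff hH.1.cont hH.1.zero
    (hH.1.alt.imp_right <| .imp (·.of_isometry isometry_subtype_coe)
      fun hZ => ⟨fun x y z => hZ x y z⟩)
    hH.2 hYcomp f hrange.ge hmeas
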